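/- For every n ≥ 1 and every γ ∈ ((4n+1)/(4n+2), 1], the γ-Hölder homotopy group π_{4n−1}^γ(ℍ^{2n}) is nontrivial. Concretely: there exists a map f : S^{4n−1} → ℝ^{4n+1} (S^{4n−1} the unit sphere in ℝ^{4n}) which is Lipschitz as a map into ℍ^{2n} (there is L with d_K(f(x), f(y)) ≤ L·|x−y| for all x, y ∈ S^{4n−1}), in particular γ-Hölder into ℍ^{2n}, such that there exists no map F : B̄^{4n} → ℝ^{4n+1} with F restricted to S^{4n−1} equal to f and with F γ-Hölder continuous as a map into ℍ^{2n} (i.e. d_K(F(x), F(y)) ≤ C·|x−y|^γ for some C and all x, y in the closed unit ball B̄^{4n}). -/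

import Mathlib

open Metric Set MeasureTheory Topology

/-- The index of the coordinate `x_j` in `ℝ^{2n+1}`. -/
def xI (n : ℕ) (j : Fin n) : Fin (2*n+1) := ⟨2*j.1, by have := j.2; omega⟩

/-- The index of the coordinate `y_j` in `ℝ^{2n+1}`. -/
def yI (n : ℕ) (j : Fin n) : Fin (2*n+1) := ⟨2*j.1+1, by have := j.2; omega⟩

/-- The index of the coordinate `t` in `ℝ^{2n+1}`. -/
def tI (n : ℕ) : Fin (2*n+1) := Fin.last (2*n)

/-- The Korányi metric on the Heisenberg group `ℍ^n = ℝ^{2n+1}`: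
`d_K(p,q) = (|z-z'|^4 + |t - t' + 2 ∑_j (x_j' y_j - x_j y_j')|^2)^{1/4}`. -/
noncomputable def dK (n : ℕ) (p q : EuclideanSpace ℝ (Fin (2*n+1))) : ℝ :=
  ((∑ i : Fin (2*n), (p (Fin.castSucc i) - q (Fin.castSucc i)) ^ 2) ^ 2 +
    (p (tI n) - q (tI n) +
      2 * ∑ j : Fin n, (q (xI n j) * p (yI n j) - p (xI n j) * q (yI n j))) ^ 2) ^ ((1:ℝ)/4)

section Determinant

variable {m : Type*} [Fintype m] [DecidableEq m]

/-- The determinant of a family of covectors on `ℝ^m`, as a continuous alternating map. -/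
noncomputable def covectorDet (m : Type*) [Fintype m] [DecidableEq m] :
    (EuclideanSpace ℝ m →L[ℝ] ℝ) [⋀^m]→L[ℝ] ℝ where
  toMultilinearMap := ((Matrix.detRowAlternating (R := ℝ) (n := m)).compLinearMap
    (LinearMap.pi fun k => (ContinuousLinearMap.apply ℝ ℝ
      (EuclideanSpace.single k (1 : ℝ))).toLinearMap)).toMultilinearMap
  cont := by
    change Continuous fun v : m → (EuclideanSpace ℝ m →L[ℝ] ℝ) =>
      Matrix.det (Matrix.of fun i k => v i (EuclideanSpace.single k (1 : ℝ)))
    refine Continuous.matrix_det (continuous_pi fun i => continuous_pi fun k => ?_)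
    exact (ContinuousLinearMap.apply ℝ ℝ (EuclideanSpace.single k (1 : ℝ))).continuous.comp
      (continuous_apply i)
  map_eq_zero_of_eq' := ((Matrix.detRowAlternating (R := ℝ) (n := m)).compLinearMap
    (LinearMap.pi fun k => (ContinuousLinearMap.apply ℝ ℝ
      (EuclideanSpace.single k (1 : ℝ))).toLinearMap)).map_eq_zero_of_eq'

theorem covectorDet_apply (v : m → (EuclideanSpace ℝ m →L[ℝ] ℝ)) :
    covectorDet m v = Matrix.det (Matrix.of fun i k => v i (EuclideanSpace.single k (1 : ℝ))) :=
  rfl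

theorem covector_eq_sum_proj (l : EuclideanSpace ℝ m →L[ℝ] ℝ) :
    l = ∑ k, l (EuclideanSpace.single k (1 : ℝ)) • EuclideanSpace.proj (𝕜 := ℝ) k := by
  ext p
  conv_lhs => rw [← (EuclideanSpace.basisFun m ℝ).sum_repr p]
  simp [map_sum, mul_comm]

theorem covectorDet_update_sum {α : Type*} (s : Finset α) (v : m → (EuclideanSpace ℝ m →L[ℝ] ℝ))
    (i : m) (c : α → ℝ) (l : α → (EuclideanSpace ℝ m →L[ℝ] ℝ)) :
    covectorDet m (Function.update v i (∑ k ∈ s, c k • l k)) =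
      ∑ k ∈ s, c k * covectorDet m (Function.update v i (l k)) := by
  have := (covectorDet m).toMultilinearMap.map_update_sum s i (fun k => c k • l k) v
  simpa using this

/-- If all rows but one vanish on two distinct coordinate directions, the determinant is zero. -/
theorem covectorDet_eq_zero_of_columns (v : m → (EuclideanSpace ℝ m →L[ℝ] ℝ)) (i₀ k₁ k₂ : m)
    (hk : k₁ ≠ k₂)
    (h : ∀ i, i ≠ i₀ → v i (EuclideanSpace.single k₁ (1 : ℝ)) = 0 ∧
      v i (EuclideanSpace.single k₂ (1 : ℝ)) = 0) :
    covectorDet m v = 0 := by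
  rw [covectorDet_apply, Matrix.det_apply]
  refine Finset.sum_eq_zero fun σ _ => ?_
  by_cases h1 : σ k₁ = i₀
  · have h2 : σ k₂ ≠ i₀ := fun h2 => hk (σ.injective (h1.trans h2.symm))
    rw [Finset.prod_eq_zero (Finset.mem_univ k₂), smul_zero]
    exact (h _ h2).2
  · rw [Finset.prod_eq_zero (Finset.mem_univ k₁), smul_zero]
    exact (h _ h1).1

theorem abs_covectorDet_le (v : m → (EuclideanSpace ℝ m →L[ℝ] ℝ)) {A : ℝ}
    (h : ∀ i, ‖v i‖ ≤ A) :
    |covectorDet m v| ≤ ‖covectorDet m‖ * A ^ Fintype.card m := by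
  have := (covectorDet m).le_opNorm_mul_prod_of_le (b := fun _ => A) h
  simpa using this

theorem abs_covectorDet_update_le (v : m → (EuclideanSpace ℝ m →L[ℝ] ℝ)) (i : m)
    (l : EuclideanSpace ℝ m →L[ℝ] ℝ) {A δ : ℝ}
    (h : ∀ i, ‖v i‖ ≤ A) (hl : ‖l‖ ≤ δ) :
    |covectorDet m (Function.update v i l)| ≤
      ‖covectorDet m‖ * (δ * A ^ (Fintype.card m - 1)) := by
  have := (covectorDet m).le_opNorm_mul_prod_of_le (m := Function.update v i l)
    (b := Function.update (fun _ => A) i δ) (by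
      intro j
      rcases eq_or_ne j i with rfl | hj
      · simpa using hl
      · simpa [hj] using h j)
  rw [Finset.prod_update_of_mem (Finset.mem_univ i)] at this
  simpa [Finset.card_sdiff] using this

theorem hasFDerivAt_covectorDet {G : Type*} [NormedAddCommGroup G] [NormedSpace ℝ G]
    {l : m → G → (EuclideanSpace ℝ m →L[ℝ] ℝ)} {l' : m → G →L[ℝ] (EuclideanSpace ℝ m →L[ℝ] ℝ)}
    {x : G} (h : ∀ i, HasFDerivAt (l i) (l' i) x) (v : G) :
    DifferentiableAt ℝ (fun x => covectorDet m fun i => l i x) x ∧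
    fderiv ℝ (fun x => covectorDet m fun i => l i x) x v =
      ∑ i, covectorDet m (Function.update (fun j => l j x) i (l' i v)) := by
  have := HasFDerivAt.multilinear_comp (covectorDet m).toContinuousMultilinearMap h
  refine ⟨this.differentiableAt, ?_⟩
  have h2 := this.fderiv
  simp only [ContinuousAlternatingMap.coe_toContinuousMultilinearMap] at h2
  rw [h2]
  simp

/-- The rows of the cofactor matrix of a gradient map are divergence free. -/
theorem sum_fderiv_cofactor_eq_zero (f : m → EuclideanSpace ℝ m → ℝ)
    (i₀ : m) (hf : ∀ i, i ≠ i₀ → ContDiff ℝ 2 (f i)) (p : EuclideanSpace ℝ m) :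
    ∑ k, fderiv ℝ (fun q => covectorDet m (Function.update (fun i => fderiv ℝ (f i) q) i₀
      (EuclideanSpace.proj (𝕜 := ℝ) k))) p (EuclideanSpace.single k (1 : ℝ)) = 0 := by
  set P : m → (EuclideanSpace ℝ m →L[ℝ] ℝ) := fun k => EuclideanSpace.proj (𝕜 := ℝ) k with hP
  set e : m → EuclideanSpace ℝ m := fun k => EuclideanSpace.single k (1 : ℝ) with he
  set v : m → m → (EuclideanSpace ℝ m →L[ℝ] ℝ) :=
    fun k => Function.update (fun i => fderiv ℝ (f i) p) i₀ (P k) with hv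
  have key : ∀ k, fderiv ℝ (fun q => covectorDet m (Function.update (fun i => fderiv ℝ (f i) q) i₀
      (P k))) p (e k) = ∑ i, covectorDet m (Function.update (v k) i
        (if i = i₀ then 0 else fderiv ℝ (fderiv ℝ (f i)) p (e k))) := by
    intro k
    have h : ∀ i, HasFDerivAt (fun q => Function.update (fun i => fderiv ℝ (f i) q) i₀ (P k) i)
        (if i = i₀ then 0 else fderiv ℝ (fderiv ℝ (f i)) p) p := by
      intro i
      split_ifs with hi
      · subst hi
        simpa using hasFDerivAt_const (P k) p
      · simp only [Function.update_of_ne hi]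
        have : ContDiff ℝ 1 (fderiv ℝ (f i)) := (hf i hi).fderiv_right (by norm_num)
        exact (this.differentiable (by norm_num) p).hasFDerivAt
    have := (hasFDerivAt_covectorDet h (e k)).2
    rw [this]
    refine Finset.sum_congr rfl fun i _ => ?_
    split_ifs <;> simp [hv]
  change ∑ k, fderiv ℝ (fun q => covectorDet m (Function.update (fun i => fderiv ℝ (f i) q) i₀
      (P k))) p (e k) = 0
  simp_rw [key]
  rw [Finset.sum_comm]
  refine Finset.sum_eq_zero fun i _ => ?_
  by_cases hi : i = i₀
  · refine Finset.sum_eq_zero fun k _ => ?_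
    simp only [hi, if_true]
    exact (covectorDet m).toMultilinearMap.map_update_zero _ _
  simp only [hi, if_false]
  have hsymm : ∀ k l, fderiv ℝ (fderiv ℝ (f i)) p (e k) (e l)
      = fderiv ℝ (fderiv ℝ (f i)) p (e l) (e k) := by
    intro k l
    exact ((hf i hi).contDiffAt.isSymmSndFDerivAt (by simp)) (e k) (e l)
  have hexp : ∀ k, covectorDet m (Function.update (v k) i (fderiv ℝ (fderiv ℝ (f i)) p (e k))) =
      ∑ l, fderiv ℝ (fderiv ℝ (f i)) p (e k) (e l) *
        covectorDet m (Function.update (v k) i (P l)) := by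
    intro k
    conv_lhs => rw [covector_eq_sum_proj (fderiv ℝ (fderiv ℝ (f i)) p (e k))]
    exact covectorDet_update_sum _ _ _ _ _
  simp_rw [hexp]
  have hanti : ∀ k l, covectorDet m (Function.update (v k) i (P l)) =
      - covectorDet m (Function.update (v l) i (P k)) := by
    intro k l
    have h1 : Function.update (v l) i (P k) =
        (Function.update (v k) i (P l)) ∘ Equiv.swap i i₀ := by
      funext j
      simp only [hv, Function.comp]
      rcases eq_or_ne j i with rfl | hji
      · rw [Equiv.swap_apply_left, Function.update_self, Function.update_of_ne (Ne.symm hi),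
          Function.update_self]
      · rcases eq_or_ne j i₀ with rfl | hji₀
        · rw [Equiv.swap_apply_right, Function.update_of_ne (Ne.symm hi), Function.update_self,
            Function.update_self]
        · rw [Equiv.swap_apply_of_ne_of_ne hji hji₀, Function.update_of_ne hji,
            Function.update_of_ne hji₀, Function.update_of_ne hji, Function.update_of_ne hji₀]
    rw [h1]
    have := (covectorDet m).toAlternatingMap.map_swap (Function.update (v k) i (P l)) hi
    simp only [ContinuousAlternatingMap.coe_toAlternatingMap] at this
    rw [this, neg_neg]
  have hS : ∑ k, ∑ l, fderiv ℝ (fderiv ℝ (f i)) p (e k) (e l) *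
        covectorDet m (Function.update (v k) i (P l)) = -
        ∑ k, ∑ l, fderiv ℝ (fderiv ℝ (f i)) p (e k) (e l) *
        covectorDet m (Function.update (v k) i (P l)) := by
    conv_lhs => rw [Finset.sum_comm]
    rw [← Finset.sum_neg_distrib]
    refine Finset.sum_congr rfl fun k _ => ?_
    rw [← Finset.sum_neg_distrib]
    refine Finset.sum_congr rfl fun l _ => ?_
    rw [hsymm l k, hanti l k]
    ring
  linarith

theorem integral_fderiv_eq_zero_of_hasCompactSupport {m : Type*} [Fintype m]
    {h : EuclideanSpace ℝ m → ℝ}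
    (hc : ContDiff ℝ 1 h) (hs : HasCompactSupport h) (v : EuclideanSpace ℝ m) :
    ∫ p, fderiv ℝ h p v = 0 := by
  have hs' : HasCompactSupport fun p => fderiv ℝ h p v := hs.fderiv_apply ℝ v
  have hcont : Continuous fun p => fderiv ℝ h p v :=
    (hc.continuous_fderiv (by norm_num)).clm_apply continuous_const
  have := integral_mul_fderiv_eq_neg_fderiv_mul_of_integrable (μ := volume)
    (f := fun _ : EuclideanSpace ℝ m => (1 : ℝ)) (g := h) (v := v)
    (by simp) (by simpa using hcont.integrable_of_hasCompactSupport hs')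
    (by simpa using hc.continuous.integrable_of_hasCompactSupport hs)
    (by simp) (fun x _ => hc.differentiable (by norm_num) x)
  simpa using this

/-- The Jacobian determinant is a null Lagrangian. -/
theorem integral_covectorDet_fderiv_eq_zero (f : m → EuclideanSpace ℝ m → ℝ)
    (i₀ : m) (hf : ∀ i, ContDiff ℝ 2 (f i))
    (hs : ∃ R : ℝ, ∀ p, R < ‖p‖ → ∀ l, covectorDet m (Function.update
      (fun i => fderiv ℝ (f i) p) i₀ l) = 0) :
    ∫ p, covectorDet m (fun i => fderiv ℝ (f i) p) = 0 := by
  set C : m → EuclideanSpace ℝ m → ℝ := fun k q =>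
    covectorDet m (Function.update (fun i => fderiv ℝ (f i) q) i₀
      (EuclideanSpace.proj (𝕜 := ℝ) k)) with hC
  have hCdiff : ∀ k, ContDiff ℝ 1 (C k) := by
    intro k
    refine (covectorDet m).toContinuousMultilinearMap.contDiff.comp ?_
    refine contDiff_pi.2 fun i => ?_
    rcases eq_or_ne i i₀ with rfl | hi
    · simpa using contDiff_const
    · simpa [hi] using (hf i).fderiv_right (m := 1) (by norm_num)
  obtain ⟨R, hR⟩ := hs
  have hsupp : ∀ k, HasCompactSupport fun p => f i₀ p * C k p := by
    intro k
    refine HasCompactSupport.intro (isCompact_closedBall 0 R) fun p hp => ?_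
    rw [mem_closedBall_zero_iff, not_le] at hp
    simp [hC, hR p hp]
  have hV : ∀ k, ContDiff ℝ 1 fun p => f i₀ p * C k p := fun k =>
    ((hf i₀).of_le (by norm_num)).mul (hCdiff k)
  have hdiv : ∀ p, covectorDet m (fun i => fderiv ℝ (f i) p) =
      ∑ k, fderiv ℝ (fun p => f i₀ p * C k p) p (EuclideanSpace.single k (1 : ℝ)) := by
    intro p
    have h1 : ∀ k, fderiv ℝ (fun p => f i₀ p * C k p) p (EuclideanSpace.single k (1 : ℝ)) =
        f i₀ p * fderiv ℝ (C k) p (EuclideanSpace.single k (1 : ℝ)) +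
        fderiv ℝ (f i₀) p (EuclideanSpace.single k (1 : ℝ)) * C k p := by
      intro k
      rw [fderiv_fun_mul ((hf i₀).differentiable (by norm_num) p)
        ((hCdiff k).differentiable (by norm_num) p)]
      simp [mul_comm]
    simp_rw [h1, Finset.sum_add_distrib, ← Finset.mul_sum]
    rw [sum_fderiv_cofactor_eq_zero f i₀ (fun i _ => hf i) p, mul_zero, zero_add]
    have h2 := covectorDet_update_sum Finset.univ (fun i => fderiv ℝ (f i) p) i₀
      (fun k => fderiv ℝ (f i₀) p (EuclideanSpace.single k (1 : ℝ)))
      (fun k => EuclideanSpace.proj (𝕜 := ℝ) k)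
    rw [← covector_eq_sum_proj, Function.update_eq_self i₀ (fun i => fderiv ℝ (f i) p)] at h2
    exact h2
  simp_rw [hdiv]
  rw [integral_finsetSum]
  · exact Finset.sum_eq_zero fun k _ =>
      integral_fderiv_eq_zero_of_hasCompactSupport (hV k) (hsupp k) _
  · intro k _
    exact (((hV k).continuous_fderiv (by norm_num)).clm_apply
      continuous_const).integrable_of_hasCompactSupport ((hsupp k).fderiv_apply ℝ _)

end Determinant

section Deformation

variable {ι : Type*} [Fintype ι] [DecidableEq ι]

/-- If `l` and `μ` are almost combinations of the first and of the second half of the rows, then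
`l w ψ det r` is almost the change of the determinant under the given row replacements. -/
theorem abs_contact_defect_le (r : ι ⊕ ι → (EuclideanSpace ℝ (ι ⊕ ι) →L[ℝ] ℝ))
    (l μ : EuclideanSpace ℝ (ι ⊕ ι) →L[ℝ] ℝ) (w : EuclideanSpace ℝ (ι ⊕ ι)) (φ ψ A δ M : ℝ)
    (c c' : ι → ℝ) (hr : ∀ k, ‖r k‖ ≤ A) (hφ : |φ| ≤ M) (hψ : |ψ| ≤ M)
    (hl : ‖l - ∑ i, c i • r (Sum.inl i)‖ ≤ δ) (hμ : ‖μ - ∑ i, c' i • r (Sum.inr i)‖ ≤ δ) :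
    |l w * ψ * covectorDet _ r - ∑ i, r (Sum.inl i) w *
      covectorDet _ (Function.update r (Sum.inl i) (ψ • l + φ • μ))| ≤
    M * δ * ‖w‖ * ‖covectorDet (ι ⊕ ι)‖ * A ^ Fintype.card (ι ⊕ ι) *
      (1 + 2 * Fintype.card ι) := by
  set D := covectorDet (ι ⊕ ι) with hD
  set E := l - ∑ i, c i • r (Sum.inl i) with hE
  set E' := μ - ∑ i, c' i • r (Sum.inr i) with hE'
  have hM : 0 ≤ M := (abs_nonneg _).trans hφ
  have hδ : 0 ≤ δ := (norm_nonneg _).trans hl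
  have hadd : ∀ i a b, D (Function.update r (Sum.inl i) (a + b)) =
      D (Function.update r (Sum.inl i) a) + D (Function.update r (Sum.inl i) b) :=
    fun i a b => D.toMultilinearMap.map_update_add r (Sum.inl i) a b
  have hsmul : ∀ i (a : ℝ) b, D (Function.update r (Sum.inl i) (a • b)) =
      a * D (Function.update r (Sum.inl i) b) :=
    fun i a b => D.toMultilinearMap.map_update_smul r (Sum.inl i) a b
  have h1 : ∀ i, D (Function.update r (Sum.inl i) l) =
      c i * D r + D (Function.update r (Sum.inl i) E) := by
    intro i
    have : l = ∑ i, c i • r (Sum.inl i) + E := by simp [hE]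
    conv_lhs => rw [this]
    rw [hadd, covectorDet_update_sum]
    congr 1
    rw [Finset.sum_eq_single i]
    · rw [Function.update_eq_self]
    · intro j _ hj
      have h0 : D (Function.update r (Sum.inl i) (r (Sum.inl j))) = 0 :=
        D.map_eq_zero_of_eq _ (i := Sum.inl i) (j := Sum.inl j)
          (by simp [hj]) (by simpa using Ne.symm hj)
      rw [← hD, h0, mul_zero]
    · simp
  have h2 : ∀ i, D (Function.update r (Sum.inl i) μ) = D (Function.update r (Sum.inl i) E') := by
    intro i
    have : μ = ∑ i, c' i • r (Sum.inr i) + E' := by simp [hE']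
    conv_lhs => rw [this]
    rw [hadd, covectorDet_update_sum]
    simp only [add_eq_right]
    refine Finset.sum_eq_zero fun j _ => ?_
    have h0 : D (Function.update r (Sum.inl i) (r (Sum.inr j))) = 0 :=
      D.map_eq_zero_of_eq _ (i := Sum.inl i) (j := Sum.inr j) (by simp) (by simp)
    rw [← hD, h0, mul_zero]
  have hlw : l w = ∑ i, c i * r (Sum.inl i) w + E w := by simp [hE]
  have hid : l w * ψ * D r - ∑ i, r (Sum.inl i) w *
      D (Function.update r (Sum.inl i) (ψ • l + φ • μ)) =
      E w * ψ * D r - ∑ i, r (Sum.inl i) w * (ψ * D (Function.update r (Sum.inl i) E) +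
        φ * D (Function.update r (Sum.inl i) E')) := by
    rw [hlw]
    simp_rw [hadd, hsmul, h1, h2]
    have : ∑ i, r (Sum.inl i) w * (ψ * (c i * D r + D (Function.update r (Sum.inl i) E)) +
        φ * D (Function.update r (Sum.inl i) E')) = (∑ i, c i * r (Sum.inl i) w) * (ψ * D r) +
        ∑ i, r (Sum.inl i) w * (ψ * D (Function.update r (Sum.inl i) E) +
        φ * D (Function.update r (Sum.inl i) E')) := by
      rw [Finset.sum_mul, ← Finset.sum_add_distrib]
      exact Finset.sum_congr rfl fun i _ => by ring
    rw [this]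
    ring
  rw [hid]
  set Q := ‖D‖ * A ^ Fintype.card (ι ⊕ ι) with hQ
  have hb1 : |E w * ψ * D r| ≤ M * δ * ‖w‖ * Q := by
    rw [abs_mul, abs_mul]
    have e1 : |E w| ≤ δ * ‖w‖ := (E.le_opNorm w).trans (by gcongr)
    have e2 := abs_covectorDet_le r hr
    calc |E w| * |ψ| * |D r| ≤ (δ * ‖w‖) * M * Q := by gcongr
      _ = _ := by ring
  have hb2 : ∀ i, |r (Sum.inl i) w * (ψ * D (Function.update r (Sum.inl i) E) +
        φ * D (Function.update r (Sum.inl i) E'))| ≤ 2 * (M * δ * ‖w‖ * Q) := by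
    intro i
    have hA : 0 ≤ A := (norm_nonneg _).trans (hr (Sum.inl i))
    have e0 : |r (Sum.inl i) w| ≤ A * ‖w‖ :=
      ((r (Sum.inl i)).le_opNorm w).trans (by gcongr; exact hr _)
    have e1 := abs_covectorDet_update_le r (Sum.inl i) E hr hl
    have e2 := abs_covectorDet_update_le r (Sum.inl i) E' hr hμ
    rw [← hD] at e1 e2
    set k := Fintype.card (ι ⊕ ι) with hk
    have hkpos : 0 < k := Fintype.card_pos_iff.2 ⟨Sum.inl i⟩
    have hpow : A * A ^ (k - 1) = A ^ k := by
      rw [← pow_succ', Nat.sub_add_cancel hkpos]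
    have e3 : |ψ * D (Function.update r (Sum.inl i) E) +
        φ * D (Function.update r (Sum.inl i) E')| ≤
        M * (‖D‖ * (δ * A ^ (k - 1))) + M * (‖D‖ * (δ * A ^ (k - 1))) := by
      refine (abs_add_le _ _).trans ?_
      rw [abs_mul, abs_mul]
      gcongr
    rw [abs_mul]
    calc _ ≤ (A * ‖w‖) * (M * (‖D‖ * (δ * A ^ (k - 1))) + M * (‖D‖ * (δ * A ^ (k - 1)))) := by
          gcongr
      _ = 2 * (M * δ * ‖w‖ * (‖D‖ * (A * A ^ (k - 1)))) := by ring
      _ = _ := by rw [hpow]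
  calc _ ≤ |E w * ψ * D r| + |∑ i, r (Sum.inl i) w * (ψ * D (Function.update r (Sum.inl i) E) +
        φ * D (Function.update r (Sum.inl i) E'))| := abs_sub _ _
    _ ≤ M * δ * ‖w‖ * Q + ∑ _i : ι, 2 * (M * δ * ‖w‖ * Q) := by
        gcongr
        exact (Finset.abs_sum_le_sum_abs _ _).trans (Finset.sum_le_sum fun i _ => hb2 i)
    _ = _ := by
        simp only [Finset.sum_const, Finset.card_univ, nsmul_eq_mul, hQ]
        ring

/-- The gradients of the translate by `s • w` of a family of functions, followed by the gradients
of the family itself. -/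
noncomputable def gradPair (x : ι → EuclideanSpace ℝ (ι ⊕ ι) → ℝ) (w : EuclideanSpace ℝ (ι ⊕ ι))
    (s : ℝ) (p : EuclideanSpace ℝ (ι ⊕ ι)) : ι ⊕ ι → (EuclideanSpace ℝ (ι ⊕ ι) →L[ℝ] ℝ) :=
  Sum.elim (fun i => fderiv ℝ (x i) (p + s • w)) (fun i => fderiv ℝ (x i) p)

/-- The density of `κ_s ∧ κ`, where `κ = ψ dx₁ ∧ ⋯ ∧ dx_N` and `κ_s` is the translate of `κ` by
`s • w`. -/
noncomputable def pairingDensity (x : ι → EuclideanSpace ℝ (ι ⊕ ι) → ℝ)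
    (ψ : EuclideanSpace ℝ (ι ⊕ ι) → ℝ) (w : EuclideanSpace ℝ (ι ⊕ ι)) (s : ℝ)
    (p : EuclideanSpace ℝ (ι ⊕ ι)) : ℝ :=
  ψ (p + s • w) * ψ p * covectorDet (ι ⊕ ι) (gradPair x w s p)

theorem pairingDensity_zero [Nonempty ι] (x : ι → EuclideanSpace ℝ (ι ⊕ ι) → ℝ)
    (ψ : EuclideanSpace ℝ (ι ⊕ ι) → ℝ) (w p : EuclideanSpace ℝ (ι ⊕ ι)) :
    pairingDensity x ψ w 0 p = 0 := by
  obtain ⟨i⟩ := ‹Nonempty ι›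
  have : covectorDet (ι ⊕ ι) (gradPair x w 0 p) = 0 :=
    (covectorDet (ι ⊕ ι)).map_eq_zero_of_eq _ (i := Sum.inl i) (j := Sum.inr i)
      (by simp [gradPair]) (by simp)
  simp [pairingDensity, this]

/-- The derivative of `pairingDensity` in the translation parameter. -/
noncomputable def pairingDensityDeriv (x : ι → EuclideanSpace ℝ (ι ⊕ ι) → ℝ)
    (ψ : EuclideanSpace ℝ (ι ⊕ ι) → ℝ) (w : EuclideanSpace ℝ (ι ⊕ ι)) (s : ℝ)
    (p : EuclideanSpace ℝ (ι ⊕ ι)) : ℝ :=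
  fderiv ℝ ψ (p + s • w) w * ψ p * covectorDet (ι ⊕ ι) (gradPair x w s p) +
    ψ (p + s • w) * ψ p * ∑ i, covectorDet (ι ⊕ ι) (Function.update (gradPair x w s p) (Sum.inl i)
      (fderiv ℝ (fun q => fderiv ℝ (x i) q w) (p + s • w)))

theorem fderiv_fderiv_apply_eq {E : Type*} [NormedAddCommGroup E] [NormedSpace ℝ E] {f : E → ℝ}
    (hf : ContDiff ℝ 2 f) (w p : E) :
    fderiv ℝ (fun q => fderiv ℝ f q w) p = fderiv ℝ (fderiv ℝ f) p w := by
  have hd : DifferentiableAt ℝ (fderiv ℝ f) p :=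
    (hf.fderiv_right (m := 1) (by norm_num)).differentiable (by norm_num) p
  ext v
  rw [fderiv_clm_apply hd (differentiableAt_const w)]
  simpa using (hf.contDiffAt.isSymmSndFDerivAt (by simp)) v w

theorem hasDerivAt_pairingDensity {x : ι → EuclideanSpace ℝ (ι ⊕ ι) → ℝ}
    {ψ : EuclideanSpace ℝ (ι ⊕ ι) → ℝ} (hx : ∀ i, ContDiff ℝ 3 (x i)) (hψ : ContDiff ℝ 2 ψ)
    (w p : EuclideanSpace ℝ (ι ⊕ ι)) (s : ℝ) :
    HasDerivAt (fun s => pairingDensity x ψ w s p) (pairingDensityDeriv x ψ w s p) s := by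
  have hline : HasDerivAt (fun s : ℝ => p + s • w) w s := by
    simpa using ((hasDerivAt_id s).smul_const w).const_add p
  have hψ' : HasDerivAt (fun s : ℝ => ψ (p + s • w)) (fderiv ℝ ψ (p + s • w) w) s :=
    (hψ.differentiable (by norm_num) _).hasFDerivAt.comp_hasDerivAt s hline
  have hrow : ∀ k, HasFDerivAt (fun s => gradPair x w s p k)
      (ContinuousLinearMap.toSpanSingleton ℝ (Sum.elim
        (fun i => fderiv ℝ (fun q => fderiv ℝ (x i) q w) (p + s • w)) (fun _ => 0) k)) s := by
    rintro (i | i)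
    · have h2 : ContDiff ℝ 2 (x i) := (hx i).of_le (by norm_num)
      have hd : HasFDerivAt (fderiv ℝ (x i)) (fderiv ℝ (fderiv ℝ (x i)) (p + s • w))
          (p + s • w) :=
        ((h2.fderiv_right (m := 1) (by norm_num)).differentiable (by norm_num) _).hasFDerivAt
      have := hd.comp_hasDerivAt s hline
      simp only [gradPair, Sum.elim_inl]
      rw [fderiv_fderiv_apply_eq h2]
      exact this.hasFDerivAt
    · simpa [gradPair] using hasFDerivAt_const (fderiv ℝ (x i) p) s
  obtain ⟨hd, he⟩ := hasFDerivAt_covectorDet hrow (1 : ℝ)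
  have hD : HasDerivAt (fun s => covectorDet (ι ⊕ ι) (gradPair x w s p))
      (∑ i, covectorDet (ι ⊕ ι) (Function.update (gradPair x w s p) (Sum.inl i)
      (fderiv ℝ (fun q => fderiv ℝ (x i) q w) (p + s • w)))) s := by
    have := hd.hasFDerivAt.hasDerivAt
    rw [he, Fintype.sum_sum_type] at this
    convert this using 1
    have hz : ∀ i : ι, covectorDet (ι ⊕ ι) (Function.update (gradPair x w s p) (Sum.inr i) 0) = 0 :=
      fun i => (covectorDet (ι ⊕ ι)).toMultilinearMap.map_update_zero _ _
    simp [hz]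
  exact ((hψ'.mul_const (ψ p)).mul hD)

/-- For an almost contact pair `(x, ψ)` the integral of `κ_s ∧ κ` hardly depends on `s`. -/
theorem abs_integral_pairingDensity_sub_le {x : ι → EuclideanSpace ℝ (ι ⊕ ι) → ℝ}
    {ψ : EuclideanSpace ℝ (ι ⊕ ι) → ℝ} (hx : ∀ i, ContDiff ℝ 3 (x i)) (hψ : ContDiff ℝ 2 ψ)
    (w : EuclideanSpace ℝ (ι ⊕ ι)) {S R A δ M : ℝ} (hS : 0 ≤ S)
    (y : ι → EuclideanSpace ℝ (ι ⊕ ι) → ℝ)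
    (hout : ∀ s ∈ Icc (-1) (S + 1), ∀ p, R < ‖p‖ → ∃ k₁ k₂ : ι ⊕ ι, k₁ ≠ k₂ ∧
      ∀ k, gradPair x w s p k (EuclideanSpace.single k₁ (1 : ℝ)) = 0 ∧
        gradPair x w s p k (EuclideanSpace.single k₂ (1 : ℝ)) = 0)
    (hA : ∀ i p, ‖fderiv ℝ (x i) p‖ ≤ A) (hM : ∀ p, |ψ p| ≤ M)
    (hδ : ∀ p, ‖fderiv ℝ ψ p - ∑ i, y i p • fderiv ℝ (x i) p‖ ≤ δ) :
    |(∫ p, pairingDensity x ψ w S p) - ∫ p, pairingDensity x ψ w 0 p| ≤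
      M * δ * ‖w‖ * ‖covectorDet (ι ⊕ ι)‖ * A ^ Fintype.card (ι ⊕ ι) *
      (1 + 2 * Fintype.card ι) *
      (volume : Measure (EuclideanSpace ℝ (ι ⊕ ι))).real (closedBall 0 R) * S := by
  set D := covectorDet (ι ⊕ ι) with hD
  have hupd0 : ∀ s ∈ Icc (-1) (S + 1), ∀ p, R < ‖p‖ → ∀ k l,
      D (Function.update (gradPair x w s p) k l) = 0 := by
    intro s hs p hp k l
    obtain ⟨k₁, k₂, hk, h⟩ := hout s hs p hp
    refine covectorDet_eq_zero_of_columns _ k k₁ k₂ hk fun i hi => ?_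
    rw [Function.update_of_ne hi]
    exact h i
  have hrow0 : ∀ s ∈ Icc (-1) (S + 1), ∀ p, R < ‖p‖ → D (gradPair x w s p) = 0 := by
    intro s hs p hp
    obtain ⟨k₁, k₂, hk, h⟩ := hout s hs p hp
    exact covectorDet_eq_zero_of_columns _ k₁ k₁ k₂ hk fun i _ => h i
  have hG0 : ∀ s ∈ Icc (-1) (S + 1), ∀ p, R < ‖p‖ → pairingDensity x ψ w s p = 0 := by
    intro s hs p hp
    simp [pairingDensity, ← hD, hrow0 s hs p hp]
  have hG0' : ∀ s ∈ Icc (-1) (S + 1), ∀ p, R < ‖p‖ → pairingDensityDeriv x ψ w s p = 0 := by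
    intro s hs p hp
    simp [pairingDensityDeriv, ← hD, hrow0 s hs p hp, hupd0 s hs p hp]
  have hfx : ∀ i, Continuous (fderiv ℝ (x i)) := fun i => (hx i).continuous_fderiv (by norm_num)
  have hfψ : Continuous (fderiv ℝ ψ) := hψ.continuous_fderiv (by norm_num)
  have hv : ∀ i, ContDiff ℝ 2 (fun q => fderiv ℝ (x i) q w) := fun i =>
    ((hx i).fderiv_right (m := 2) (by norm_num)).clm_apply contDiff_const
  have hfv : ∀ i, Continuous (fderiv ℝ (fun q => fderiv ℝ (x i) q w)) := fun i =>
    (hv i).continuous_fderiv (by norm_num)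
  have hψc := hψ.continuous
  have hsh : Continuous fun z : ℝ × EuclideanSpace ℝ (ι ⊕ ι) => z.2 + z.1 • w := by fun_prop
  have hrowc : Continuous fun z : ℝ × EuclideanSpace ℝ (ι ⊕ ι) => gradPair x w z.1 z.2 := by
    refine continuous_pi fun k => ?_
    rcases k with i | i
    · exact (hfx i).comp hsh
    · exact (hfx i).comp continuous_snd
  have hDc : Continuous D := D.cont
  have hGc : Continuous fun z : ℝ × EuclideanSpace ℝ (ι ⊕ ι) => pairingDensity x ψ w z.1 z.2 :=
    ((hψc.comp hsh).mul (hψc.comp continuous_snd)).mul (hDc.comp hrowc)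
  have hGc' : Continuous fun z : ℝ × EuclideanSpace ℝ (ι ⊕ ι) =>
      pairingDensityDeriv x ψ w z.1 z.2 := by
    refine ((((hfψ.comp hsh).clm_apply continuous_const).mul (hψc.comp continuous_snd)).mul
      (hDc.comp hrowc)).add (((hψc.comp hsh).mul (hψc.comp continuous_snd)).mul
      (continuous_finsetSum _ fun i _ => hDc.comp (hrowc.update _ ((hfv i).comp hsh))))
  have hslice : ∀ s : ℝ, Continuous fun p : EuclideanSpace ℝ (ι ⊕ ι) => (s, p) := fun s => by
    fun_prop
  have hintegral : ∀ {h : EuclideanSpace ℝ (ι ⊕ ι) → ℝ}, Continuous h → (∀ p, R < ‖p‖ → h p = 0) →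
      Integrable h := by
    intro h hc h0
    refine hc.integrable_of_hasCompactSupport
      (HasCompactSupport.intro (isCompact_closedBall 0 R) fun p hp => h0 p ?_)
    simpa using hp
  set B := M * δ * ‖w‖ * ‖covectorDet (ι ⊕ ι)‖ * A ^ Fintype.card (ι ⊕ ι) *
      (1 + 2 * Fintype.card ι) with hB
  -- the integral of the derivative
  have hbound : ∀ s ∈ Icc (-1) (S + 1), |∫ p, pairingDensityDeriv x ψ w s p| ≤
      B * (volume : Measure (EuclideanSpace ℝ (ι ⊕ ι))).real (closedBall 0 R) := by
    intro s hs
    set pr : ι → EuclideanSpace ℝ (ι ⊕ ι) → ℝ := fun i q =>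
      (ψ (q + s • w) * ψ q) * fderiv ℝ (x i) (q + s • w) w with hpr
    have htr : ContDiff ℝ 3 fun q : EuclideanSpace ℝ (ι ⊕ ι) => q + s • w := by fun_prop
    have hprc : ∀ i, ContDiff ℝ 2 (pr i) := fun i =>
      ((hψ.comp (htr.of_le (by norm_num))).mul hψ).mul ((hv i).comp (htr.of_le (by norm_num)))
    have hprd : ∀ i p, fderiv ℝ (pr i) p = (ψ (p + s • w) * ψ p) •
        fderiv ℝ (fun q => fderiv ℝ (x i) q w) (p + s • w) +
        fderiv ℝ (x i) (p + s • w) w • (ψ p • fderiv ℝ ψ (p + s • w) +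
          ψ (p + s • w) • fderiv ℝ ψ p) := by
      intro i p
      have d1 : HasFDerivAt (fun q => ψ (q + s • w)) (fderiv ℝ ψ (p + s • w)) p :=
        (hasFDerivAt_comp_add_right (s • w)).2 (hψ.differentiable (by norm_num) _).hasFDerivAt
      have d2 : HasFDerivAt ψ (fderiv ℝ ψ p) p := (hψ.differentiable (by norm_num) _).hasFDerivAt
      have d3 : HasFDerivAt (fun q => fderiv ℝ (x i) (q + s • w) w)
          (fderiv ℝ (fun q => fderiv ℝ (x i) q w) (p + s • w)) p :=
        (hasFDerivAt_comp_add_right (f := fun q => fderiv ℝ (x i) q w) (s • w)).2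
          ((hv i).differentiable (by norm_num) _).hasFDerivAt
      have d4 : HasFDerivAt (pr i) _ p := (d1.mul d2).mul d3
      rw [d4.fderiv]
      ext v
      simp
      ring
    set err : EuclideanSpace ℝ (ι ⊕ ι) → ℝ := fun p =>
      fderiv ℝ ψ (p + s • w) w * ψ p * D (gradPair x w s p) -
      ∑ i, gradPair x w s p (Sum.inl i) w * D (Function.update (gradPair x w s p) (Sum.inl i)
        (ψ p • fderiv ℝ ψ (p + s • w) + ψ (p + s • w) • fderiv ℝ ψ p)) with herr
    have hadd : ∀ p i a b, D (Function.update (gradPair x w s p) (Sum.inl i) (a + b)) =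
        D (Function.update (gradPair x w s p) (Sum.inl i) a) +
        D (Function.update (gradPair x w s p) (Sum.inl i) b) :=
      fun p i a b => D.toMultilinearMap.map_update_add _ (Sum.inl i) a b
    have hsmul : ∀ p i (a : ℝ) b, D (Function.update (gradPair x w s p) (Sum.inl i) (a • b)) =
        a * D (Function.update (gradPair x w s p) (Sum.inl i) b) :=
      fun p i a b => D.toMultilinearMap.map_update_smul _ (Sum.inl i) a b
    have hsplit : ∀ p, pairingDensityDeriv x ψ w s p = err p +
        ∑ i, D (Function.update (gradPair x w s p) (Sum.inl i) (fderiv ℝ (pr i) p)) := by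
      intro p
      have h1 : ∀ i, D (Function.update (gradPair x w s p) (Sum.inl i) (fderiv ℝ (pr i) p)) =
          (ψ (p + s • w) * ψ p) * D (Function.update (gradPair x w s p) (Sum.inl i)
            (fderiv ℝ (fun q => fderiv ℝ (x i) q w) (p + s • w))) +
          gradPair x w s p (Sum.inl i) w * D (Function.update (gradPair x w s p) (Sum.inl i)
            (ψ p • fderiv ℝ ψ (p + s • w) + ψ (p + s • w) • fderiv ℝ ψ p)) := by
        intro i
        rw [hprd i p, hadd, hsmul, hsmul]
        rfl
      simp_rw [h1, Finset.sum_add_distrib, ← Finset.mul_sum]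
      simp only [pairingDensityDeriv, herr, ← hD]
      ring
    have hnull : ∀ i, ∫ p, D (Function.update (gradPair x w s p) (Sum.inl i)
        (fderiv ℝ (pr i) p)) = 0 := by
      intro i
      set f : ι ⊕ ι → EuclideanSpace ℝ (ι ⊕ ι) → ℝ := Function.update
        (Sum.elim (fun i q => x i (q + s • w)) x) (Sum.inl i) (pr i) with hf
      have hfd : ∀ p, (fun k => fderiv ℝ (f k) p) =
          Function.update (gradPair x w s p) (Sum.inl i) (fderiv ℝ (pr i) p) := by
        intro p
        funext k
        rcases eq_or_ne k (Sum.inl i) with rfl | hk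
        · rw [hf, Function.update_self, Function.update_self]
        · rw [Function.update_of_ne hk, hf, Function.update_of_ne hk]
          rcases k with j | j
          · simp [gradPair, fderiv_comp_add_right]
          · simp [gradPair]
      have := integral_covectorDet_fderiv_eq_zero f (Sum.inl i) (by
        intro k
        rcases eq_or_ne k (Sum.inl i) with rfl | hk
        · rw [hf, Function.update_self]
          exact hprc i
        · rw [hf, Function.update_of_ne hk]
          rcases k with j | j
          · exact ((hx j).comp htr).of_le (by norm_num)
          · exact (hx j).of_le (by norm_num)) ⟨R, fun p hp l => by
            rw [hfd p, Function.update_idem]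
            exact hupd0 s hs p hp _ _⟩
      simpa only [hfd] using this
    have hrowcs : Continuous fun p => gradPair x w s p := hrowc.comp (hslice s)
    have hshs : Continuous fun p : EuclideanSpace ℝ (ι ⊕ ι) => p + s • w := htr.continuous
    have hupdc : ∀ (i : ι) {l : EuclideanSpace ℝ (ι ⊕ ι) → (EuclideanSpace ℝ (ι ⊕ ι) →L[ℝ] ℝ)},
        Continuous l → Continuous fun p =>
          D (Function.update (gradPair x w s p) (Sum.inl i) (l p)) :=
      fun i l hl => hDc.comp (hrowcs.update _ hl)
    have herrc : Continuous err := by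
      refine ((((hfψ.comp hshs).clm_apply continuous_const).mul hψc).mul
        (hDc.comp hrowcs)).sub (continuous_finsetSum _ fun i _ => ?_)
      refine (((continuous_apply (Sum.inl i)).comp hrowcs).clm_apply continuous_const).mul
        (hupdc i ?_)
      exact (hψc.smul (hfψ.comp hshs)).add ((hψc.comp hshs).smul hfψ)
    have herr0 : ∀ p, R < ‖p‖ → err p = 0 := by
      intro p hp
      simp [herr, hrow0 s hs p hp, hupd0 s hs p hp]
    have herri : Integrable err := hintegral herrc herr0
    have hsumi : ∀ i, Integrable fun p => D (Function.update (gradPair x w s p) (Sum.inl i)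
        (fderiv ℝ (pr i) p)) := fun i =>
      hintegral (hupdc i ((hprc i).continuous_fderiv (by norm_num)))
        fun p hp => hupd0 s hs p hp _ _
    have hval : ∫ p, pairingDensityDeriv x ψ w s p = ∫ p, err p := by
      simp_rw [hsplit]
      rw [integral_add herri (integrable_finsetSum _ fun i _ => hsumi i),
        integral_finsetSum _ fun i _ => hsumi i]
      simp [hnull]
    have hrn : ∀ p k, ‖gradPair x w s p k‖ ≤ A := by
      rintro p (i | i)
      · exact hA i _
      · exact hA i _
    rw [hval, ← setIntegral_eq_integral_of_forall_compl_eq_zero (s := closedBall 0 R)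
      (fun p hp => herr0 p (by simpa using hp)), ← Real.norm_eq_abs]
    refine norm_setIntegral_le_of_norm_le_const (isCompact_closedBall _ _).measure_lt_top
      fun p _ => ?_
    exact abs_contact_defect_le (gradPair x w s p) (fderiv ℝ ψ (p + s • w)) (fderiv ℝ ψ p) w
      (ψ (p + s • w)) (ψ p) A δ M (fun i => y i (p + s • w)) (fun i => y i p) (hrn p)
      (hM _) (hM _) (hδ _) (hδ _)
  -- differentiation under the integral sign
  obtain ⟨K, hK⟩ := ((isCompact_Icc (a := (-1 : ℝ)) (b := S + 1)).prod
    (isCompact_closedBall (0 : EuclideanSpace ℝ (ι ⊕ ι)) R)).exists_bound_of_continuousOn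
    hGc'.continuousOn
  have hderiv : ∀ s ∈ Icc 0 S, HasDerivAt (fun s => ∫ p, pairingDensity x ψ w s p)
      (∫ p, pairingDensityDeriv x ψ w s p) s := by
    intro s hs
    have hs' : s ∈ Ioo (-1) (S + 1) := ⟨by linarith [hs.1], by linarith [hs.2]⟩
    refine (hasDerivAt_integral_of_dominated_loc_of_deriv_le
      (s := Icc (-1) (S + 1)) (bound := (closedBall 0 R).indicator fun _ => K)
      (Icc_mem_nhds hs'.1 hs'.2) (Filter.Eventually.of_forall fun s =>
        (hGc.comp (hslice s)).aestronglyMeasurable)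
      (hintegral (hGc.comp (hslice s)) (hG0 s (Ioo_subset_Icc_self hs')))
      (hGc'.comp (hslice s)).aestronglyMeasurable
      (Filter.Eventually.of_forall fun p s hs => ?_) ?_
      (Filter.Eventually.of_forall fun p s _ => hasDerivAt_pairingDensity hx hψ w p s)).2
    · by_cases hp : p ∈ closedBall (0 : EuclideanSpace ℝ (ι ⊕ ι)) R
      · rw [indicator_of_mem hp]
        exact hK (s, p) ⟨hs, hp⟩
      · rw [indicator_of_notMem hp, hG0' s hs p (by simpa using hp), norm_zero]
    · exact (integrable_indicator_iff measurableSet_closedBall).2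
        (integrableOn_const (isCompact_closedBall _ _).measure_lt_top.ne)
  have := norm_image_sub_le_of_norm_deriv_le_segment' (f := fun s => ∫ p, pairingDensity x ψ w s p)
    (f' := fun s => ∫ p, pairingDensityDeriv x ψ w s p) (a := 0) (b := S)
    (C := B * (volume : Measure (EuclideanSpace ℝ (ι ⊕ ι))).real (closedBall 0 R))
    (fun s hs => (hderiv s hs).hasDerivWithinAt)
    (fun s hs => hbound s ⟨by linarith [hs.1], by linarith [hs.2]⟩) S ⟨hS, le_rfl⟩
  simpa using this

end Deformation

section Mollification

variable {m : Type*} [Fintype m]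

/-- A smooth probability density supported in the unit ball. -/
noncomputable def unitKernel (m : Type*) [Fintype m] : EuclideanSpace ℝ m → ℝ :=
  (ContDiffBump.mk (c := (0 : EuclideanSpace ℝ m)) (1 / 2) 1 (by norm_num) (by norm_num)).normed
    volume

/-- The kernel `unitKernel` rescaled to the ball of radius `ε`. -/
noncomputable def mollKernel (ε : ℝ) (z : EuclideanSpace ℝ m) : ℝ :=
  (ε ^ Module.finrank ℝ (EuclideanSpace ℝ m))⁻¹ * unitKernel m (ε⁻¹ • z)

/-- The mollification of a function at scale `ε`. -/
noncomputable def mollify (ε : ℝ) (h : EuclideanSpace ℝ m → ℝ) : EuclideanSpace ℝ m → ℝ :=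
  convolution (mollKernel ε) h (ContinuousLinearMap.mul ℝ ℝ) volume

theorem contDiff_unitKernel {n : ℕ∞} : ContDiff ℝ n (unitKernel m) :=
  ContDiffBump.contDiff_normed _

theorem unitKernel_nonneg (z : EuclideanSpace ℝ m) : 0 ≤ unitKernel m z :=
  ContDiffBump.nonneg_normed _ _

theorem unitKernel_eq_zero {z : EuclideanSpace ℝ m} (hz : 1 < ‖z‖) : unitKernel m z = 0 := by
  have : z ∉ Function.support (unitKernel m) := by
    rw [unitKernel, ContDiffBump.support_normed_eq]
    simpa using hz.le
  simpa using this

theorem integral_unitKernel : ∫ z, unitKernel m z = 1 :=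
  ContDiffBump.integral_normed _

theorem contDiff_mollKernel (ε : ℝ) {n : ℕ∞} :
    ContDiff ℝ n (mollKernel ε : EuclideanSpace ℝ m → ℝ) :=
  contDiff_const.mul (contDiff_unitKernel.comp (contDiff_const_smul _))

theorem mollKernel_nonneg {ε : ℝ} (hε : 0 < ε) (z : EuclideanSpace ℝ m) : 0 ≤ mollKernel ε z :=
  mul_nonneg (by positivity) (unitKernel_nonneg _)

theorem mollKernel_eq_zero {ε : ℝ} (hε : 0 < ε) {z : EuclideanSpace ℝ m} (hz : ε < ‖z‖) :
    mollKernel ε z = 0 := by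
  rw [mollKernel, unitKernel_eq_zero, mul_zero]
  rw [norm_smul, norm_inv, Real.norm_of_nonneg hε.le, ← div_eq_inv_mul, lt_div_iff₀ hε]
  simpa using hz

theorem hasCompactSupport_mollKernel {ε : ℝ} (hε : 0 < ε) :
    HasCompactSupport (mollKernel ε : EuclideanSpace ℝ m → ℝ) :=
  HasCompactSupport.intro (isCompact_closedBall 0 ε) fun z hz =>
    mollKernel_eq_zero hε (by simpa using hz)

theorem integral_mollKernel {ε : ℝ} (hε : 0 < ε) :
    ∫ z : EuclideanSpace ℝ m, mollKernel ε z = 1 := by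
  simp only [mollKernel]
  rw [integral_const_mul, Measure.integral_comp_inv_smul_of_nonneg _ _ hε.le, integral_unitKernel,
    smul_eq_mul, mul_one, inv_mul_cancel₀ (by positivity)]

theorem integral_norm_fderiv_mollKernel {ε : ℝ} (hε : 0 < ε) :
    ∫ z : EuclideanSpace ℝ m, ‖fderiv ℝ (mollKernel ε) z‖ =
      (∫ z, ‖fderiv ℝ (unitKernel m) z‖) / ε := by
  have h : ∀ z : EuclideanSpace ℝ m, ‖fderiv ℝ (mollKernel ε) z‖ =
      ((ε ^ Module.finrank ℝ (EuclideanSpace ℝ m))⁻¹ * ε⁻¹) *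
        ‖fderiv ℝ (unitKernel m) (ε⁻¹ • z)‖ := by
    intro z
    have h1 : HasFDerivAt (fun z : EuclideanSpace ℝ m => ε⁻¹ • z)
        (ε⁻¹ • ContinuousLinearMap.id ℝ (EuclideanSpace ℝ m)) z :=
      (hasFDerivAt_id z).const_smul ε⁻¹
    have h2 : HasFDerivAt (unitKernel m) (fderiv ℝ (unitKernel m) (ε⁻¹ • z)) (ε⁻¹ • z) :=
      ((contDiff_unitKernel (n := 1)).differentiable (by norm_num) _).hasFDerivAt
    have h3 : HasFDerivAt (mollKernel ε) _ z := (h2.comp z h1).const_mul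
      (ε ^ Module.finrank ℝ (EuclideanSpace ℝ m))⁻¹
    rw [h3.fderiv, ContinuousLinearMap.comp_smul, ContinuousLinearMap.comp_id, smul_smul,
      norm_smul, Real.norm_of_nonneg (by positivity)]
  simp_rw [h]
  rw [integral_const_mul,
    Measure.integral_comp_inv_smul_of_nonneg _ (fun z => ‖fderiv ℝ (unitKernel m) z‖) hε.le,
    smul_eq_mul]
  field_simp

theorem mollify_apply (ε : ℝ) (h : EuclideanSpace ℝ m → ℝ) (p : EuclideanSpace ℝ m) :
    mollify ε h p = ∫ z, mollKernel ε z * h (p - z) := rfl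

theorem integrable_mollKernel_mul {ε : ℝ} (hε : 0 < ε) {h : EuclideanSpace ℝ m → ℝ}
    (hh : Continuous h) (p : EuclideanSpace ℝ m) :
    Integrable fun z => mollKernel ε z * h (p - z) := by
  refine Continuous.integrable_of_hasCompactSupport
    (((contDiff_mollKernel ε (n := 0)).continuous).mul (by fun_prop)) ?_
  exact (hasCompactSupport_mollKernel hε).mul_right

theorem contDiff_mollify {ε : ℝ} (hε : 0 < ε) {h : EuclideanSpace ℝ m → ℝ}
    (hh : Continuous h) {n : ℕ∞} : ContDiff ℝ n (mollify ε h) :=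
  (hasCompactSupport_mollKernel hε).contDiff_convolution_left _ (contDiff_mollKernel ε)
    hh.locallyIntegrable

theorem differentiable_mollify {ε : ℝ} (hε : 0 < ε) {h : EuclideanSpace ℝ m → ℝ}
    (hh : Continuous h) : Differentiable ℝ (mollify ε h) :=
  (contDiff_mollify hε hh (n := 1)).differentiable (by norm_num)

theorem mollify_congr {ε : ℝ} (hε : 0 < ε) {h h' : EuclideanSpace ℝ m → ℝ}
    {p : EuclideanSpace ℝ m} (H : ∀ q, ‖q - p‖ ≤ ε → h q = h' q) :
    mollify ε h p = mollify ε h' p := by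
  rw [mollify_apply, mollify_apply]
  congr 1
  funext z
  by_cases hz : ε < ‖z‖
  · rw [mollKernel_eq_zero hε hz, zero_mul, zero_mul]
  · rw [H (p - z) (by simpa using hz)]

theorem mollify_eventuallyEq {ε r : ℝ} (hε : 0 < ε) (hr : ε < r) {h h' : EuclideanSpace ℝ m → ℝ}
    {p : EuclideanSpace ℝ m} (H : ∀ q, ‖q - p‖ < r → h q = h' q) :
    mollify ε h =ᶠ[𝓝 p] mollify ε h' := by
  filter_upwards [ball_mem_nhds p (sub_pos.2 hr)] with p' hp'
  refine mollify_congr hε fun q hq => H q ?_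
  rw [mem_ball, dist_eq_norm] at hp'
  have := norm_add_le (q - p') (p' - p)
  rw [sub_add_sub_cancel] at this
  linarith

theorem mollify_const {ε : ℝ} (hε : 0 < ε) (c : ℝ) (p : EuclideanSpace ℝ m) :
    mollify ε (fun _ => c) p = c := by
  rw [mollify_apply, integral_mul_const, integral_mollKernel hε, one_mul]

theorem mollify_sub {ε : ℝ} (hε : 0 < ε) {h h' : EuclideanSpace ℝ m → ℝ} (hh : Continuous h)
    (hh' : Continuous h') (p : EuclideanSpace ℝ m) :
    mollify ε (fun q => h q - h' q) p = mollify ε h p - mollify ε h' p := by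
  simp only [mollify_apply, mul_sub]
  exact integral_sub (integrable_mollKernel_mul hε hh p) (integrable_mollKernel_mul hε hh' p)

theorem mollify_sum {ι : Type*} [Fintype ι] {ε : ℝ} (hε : 0 < ε) (c : ι → ℝ)
    {h : ι → EuclideanSpace ℝ m → ℝ} (hh : ∀ i, Continuous (h i)) (p : EuclideanSpace ℝ m) :
    mollify ε (fun q => ∑ i, c i * h i q) p = ∑ i, c i * mollify ε (h i) p := by
  have hc : ∀ i, Continuous fun q => c i * h i q := fun i => continuous_const.mul (hh i)
  simp only [mollify_apply, Finset.mul_sum]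
  rw [integral_finsetSum _ fun i _ => integrable_mollKernel_mul hε (hc i) p]
  refine Finset.sum_congr rfl fun i _ => ?_
  rw [← integral_const_mul]
  congr 1
  funext z
  ring

theorem abs_mollify_le {ε δ : ℝ} (hε : 0 < ε) {h : EuclideanSpace ℝ m → ℝ}
    {p : EuclideanSpace ℝ m} (H : ∀ q, ‖q - p‖ ≤ ε → |h q| ≤ δ) :
    |mollify ε h p| ≤ δ := by
  have hk : Integrable (mollKernel ε : EuclideanSpace ℝ m → ℝ) :=
    (contDiff_mollKernel ε (n := 0)).continuous.integrable_of_hasCompactSupport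
      (hasCompactSupport_mollKernel hε)
  rw [mollify_apply, ← Real.norm_eq_abs]
  calc ‖∫ z, mollKernel ε z * h (p - z)‖ ≤ ∫ z : EuclideanSpace ℝ m, mollKernel ε z * δ := by
        refine norm_integral_le_of_norm_le (hk.mul_const δ)
          (Filter.Eventually.of_forall fun z => ?_)
        rw [norm_mul, Real.norm_of_nonneg (mollKernel_nonneg hε z)]
        by_cases hz : ε < ‖z‖
        · rw [mollKernel_eq_zero hε hz, zero_mul, zero_mul]
        · exact mul_le_mul_of_nonneg_left (H (p - z) (by simpa using hz)) (mollKernel_nonneg hε z)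
    _ = δ := by rw [integral_mul_const, integral_mollKernel hε, one_mul]

theorem norm_fderiv_mollify_le {ε δ : ℝ} (hε : 0 < ε) {h : EuclideanSpace ℝ m → ℝ}
    (hh : Continuous h) {p : EuclideanSpace ℝ m} (H : ∀ q, ‖q - p‖ ≤ ε → |h q| ≤ δ) :
    ‖fderiv ℝ (mollify ε h) p‖ ≤ (∫ z, ‖fderiv ℝ (unitKernel m) z‖) / ε * δ := by
  have hd := (hasCompactSupport_mollKernel (m := m) hε).hasFDerivAt_convolution_left
    (ContinuousLinearMap.mul ℝ ℝ) (contDiff_mollKernel ε (n := 1))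
    (hh.locallyIntegrable (μ := volume)) p
  have hk : Integrable fun z : EuclideanSpace ℝ m => ‖fderiv ℝ (mollKernel ε) z‖ :=
    (((contDiff_mollKernel ε (n := 1)).continuous_fderiv
      (by norm_num)).integrable_of_hasCompactSupport
      ((hasCompactSupport_mollKernel hε).fderiv ℝ)).norm
  rw [mollify, hd.fderiv, convolution_def, ← integral_norm_fderiv_mollKernel hε,
    ← integral_mul_const]
  refine norm_integral_le_of_norm_le (hk.mul_const δ) (Filter.Eventually.of_forall fun z => ?_)
  have heq : (ContinuousLinearMap.precompL (EuclideanSpace ℝ m) (ContinuousLinearMap.mul ℝ ℝ))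
      (fderiv ℝ (mollKernel ε) z) (h (p - z)) = h (p - z) • fderiv ℝ (mollKernel ε) z := by
    ext v
    simp [ContinuousLinearMap.precompL_apply, mul_comm]
  rw [heq, norm_smul, mul_comm]
  by_cases hz : ε < ‖z‖
  · have h0 : fderiv ℝ (mollKernel ε) z = 0 := by
      have : (mollKernel ε : EuclideanSpace ℝ m → ℝ) =ᶠ[𝓝 z] fun _ => 0 := by
        filter_upwards [(isOpen_lt continuous_const continuous_norm).mem_nhds hz] with z' hz'
        exact mollKernel_eq_zero hε hz'
      rw [this.fderiv_eq]
      simp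
    simp [h0]
  · exact mul_le_mul_of_nonneg_left (H (p - z) (by simpa using hz)) (norm_nonneg _)

theorem norm_fderiv_mollify_sub_sum_le {ι : Type*} [Fintype ι] {ε δ : ℝ} (hε : 0 < ε)
    {ψ : EuclideanSpace ℝ m → ℝ} {x : ι → EuclideanSpace ℝ m → ℝ} (hψ : Continuous ψ)
    (hx : ∀ i, Continuous (x i)) (c : ι → ℝ) {p : EuclideanSpace ℝ m}
    (H : ∀ q, ‖q - p‖ ≤ ε → |ψ q - ψ p - ∑ i, c i * (x i q - x i p)| ≤ δ) :
    ‖fderiv ℝ (mollify ε ψ) p - ∑ i, c i • fderiv ℝ (mollify ε (x i)) p‖ ≤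
      (∫ z, ‖fderiv ℝ (unitKernel m) z‖) / ε * δ := by
  set k : ℝ := ψ p - ∑ i, c i * x i p with hk
  have hs : Continuous fun q => ∑ i, c i * x i q :=
    continuous_finsetSum _ fun i _ => continuous_const.mul (hx i)
  have hψs : Continuous fun q => ψ q - ∑ i, c i * x i q := hψ.sub hs
  have hψk : Continuous fun q => ψ q - ∑ i, c i * x i q - k := hψs.sub continuous_const
  have hfun : mollify ε (fun q => ψ q - ∑ i, c i * x i q - k) =
      fun q => mollify ε ψ q - ∑ i, c i * mollify ε (x i) q - k := by
    funext q
    rw [mollify_sub hε hψs continuous_const, mollify_sub hε hψ hs, mollify_const hε,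
      mollify_sum hε c hx]
  have hd : HasFDerivAt (mollify ε (fun q => ψ q - ∑ i, c i * x i q - k))
      (fderiv ℝ (mollify ε ψ) p - ∑ i, c i • fderiv ℝ (mollify ε (x i)) p) p := by
    rw [hfun]
    refine HasFDerivAt.sub_const k (HasFDerivAt.fun_sub (differentiable_mollify hε hψ p).hasFDerivAt
      (HasFDerivAt.fun_sum fun i _ =>
        (differentiable_mollify hε (hx i) p).hasFDerivAt.const_mul (c i)))
  rw [← hd.fderiv]
  refine norm_fderiv_mollify_le hε hψk fun q hq => ?_
  convert H q hq using 2
  simp only [hk, mul_sub, Finset.sum_sub_distrib]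
  ring

theorem fderiv_mollify_clm {ε : ℝ} (hε : 0 < ε) (l : EuclideanSpace ℝ m →L[ℝ] ℝ)
    (p : EuclideanSpace ℝ m) : fderiv ℝ (mollify ε l) p = l := by
  have h : mollify ε l = fun q => l q - ∫ z, mollKernel ε z * l z := by
    funext q
    have h0 : Integrable (mollKernel ε : EuclideanSpace ℝ m → ℝ) :=
      (contDiff_mollKernel ε (n := 0)).continuous.integrable_of_hasCompactSupport
        (hasCompactSupport_mollKernel hε)
    have h1 : Integrable fun z => mollKernel ε z * l z :=
      ((contDiff_mollKernel ε (n := 0)).continuous.mul l.continuous).integrable_of_hasCompactSupport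
        (hasCompactSupport_mollKernel hε).mul_right
    simp only [mollify_apply, map_sub, mul_sub]
    rw [integral_sub (h0.mul_const _) h1, integral_mul_const, integral_mollKernel hε, one_mul]
  rw [h]
  exact (l.hasFDerivAt.sub_const _).fderiv

theorem tendsto_mollify {ε : ℕ → ℝ} (hε : ∀ k, 0 < ε k)
    (hlim : Filter.Tendsto ε Filter.atTop (𝓝 0)) {h : EuclideanSpace ℝ m → ℝ}
    (hh : Continuous h) (p : EuclideanSpace ℝ m) :
    Filter.Tendsto (fun k => mollify (ε k) h p) Filter.atTop (𝓝 (h p)) := by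
  rw [Metric.tendsto_atTop']
  intro η hη
  obtain ⟨r, hr, hb⟩ := Metric.continuous_iff.1 hh p (η / 2) (by positivity)
  obtain ⟨k₀, hk₀⟩ := (hlim.eventually (gt_mem_nhds hr)).exists_forall_of_atTop
  refine ⟨k₀, fun k hk => ?_⟩
  have h1 : mollify (ε k) h p - h p = mollify (ε k) (fun q => h q - h p) p := by
    rw [mollify_sub (hε k) hh continuous_const, mollify_const (hε k)]
  rw [Real.dist_eq, h1]
  refine (abs_mollify_le (δ := η / 2) (hε k) fun q hq => ?_).trans_lt (by linarith)
  refine (hb q ?_).le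
  rw [dist_eq_norm]
  exact hq.trans_lt (hk₀ k hk.le)

theorem tendsto_fderiv_mollify {ε : ℕ → ℝ} (hε : ∀ k, 0 < ε k)
    (hlim : Filter.Tendsto ε Filter.atTop (𝓝 0)) {h : EuclideanSpace ℝ m → ℝ}
    (hh : Continuous h) {p : EuclideanSpace ℝ m} (hd : DifferentiableAt ℝ h p) :
    Filter.Tendsto (fun k => fderiv ℝ (mollify (ε k) h) p) Filter.atTop (𝓝 (fderiv ℝ h p)) := by
  rw [Metric.tendsto_atTop']
  intro η hη
  set K := ∫ z, ‖fderiv ℝ (unitKernel m) z‖ with hK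
  have hK0 : 0 ≤ K := integral_nonneg fun z => norm_nonneg _
  have hlit := hd.hasFDerivAt.isLittleO
  have hc : 0 < η / (2 * (K + 1)) := by positivity
  obtain ⟨r, hr, hb⟩ := Metric.eventually_nhds_iff_ball.1 (hlit.def hc)
  obtain ⟨k₀, hk₀⟩ := (hlim.eventually (gt_mem_nhds hr)).exists_forall_of_atTop
  refine ⟨k₀, fun k hk => ?_⟩
  have := norm_fderiv_mollify_sub_sum_le (ι := Unit) (hε k) hh
    (x := fun _ => fderiv ℝ h p) (fun _ => (fderiv ℝ h p).continuous) (fun _ => 1) (p := p)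
    (δ := η / (2 * (K + 1)) * ε k) (fun q hq => by
      have h1 := hb q (by rw [mem_ball, dist_eq_norm]; exact hq.trans_lt (hk₀ k hk.le))
      simp only [Finset.univ_unique, one_mul, Finset.sum_singleton, ← map_sub]
      refine h1.trans ?_
      gcongr)
  simp only [Finset.univ_unique, one_smul, Finset.sum_singleton,
    fderiv_mollify_clm (hε k)] at this
  rw [dist_eq_norm]
  refine this.trans_lt ?_
  have he := hε k
  rw [← hK]
  calc K / ε k * (η / (2 * (K + 1)) * ε k) = K / (K + 1) * (η / 2) := by field_simp
    _ ≤ 1 * (η / 2) := by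
        gcongr
        rw [div_le_one (by positivity)]
        linarith
    _ < η := by linarith

theorem fderiv_mollify_apply_eq_zero {ε : ℝ} (hε : 0 < ε) {h : EuclideanSpace ℝ m → ℝ}
    (hh : Continuous h) {v : EuclideanSpace ℝ m} (H : ∀ q (t : ℝ), h (q + t • v) = h q)
    (p : EuclideanSpace ℝ m) : fderiv ℝ (mollify ε h) p v = 0 := by
  have hinv : ∀ t : ℝ, mollify ε h (p + t • v) = mollify ε h p := by
    intro t
    simp only [mollify_apply]
    congr 1
    funext z
    rw [show p + t • v - z = (p - z) + t • v by abel, H]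
  rw [← (differentiable_mollify hε hh p).lineDeriv_eq_fderiv, lineDeriv]
  simp [hinv]

end Mollification

section Profile

theorem hasDerivAt_sq_max_zero (s : ℝ) :
    HasDerivAt (fun s : ℝ => (max s 0) ^ 2) (2 * max s 0) s := by
  rcases lt_trichotomy s 0 with hs | rfl | hs
  · rw [max_eq_right hs.le, mul_zero]
    refine (hasDerivAt_const s (0 : ℝ)).congr_of_eventuallyEq ?_
    filter_upwards [gt_mem_nhds hs] with r hr
    simp [max_eq_right hr.le]
  · rw [max_self, mul_zero, hasDerivAt_iff_isLittleO]
    refine Asymptotics.IsBigO.trans_isLittleO (g := fun r : ℝ => r ^ 2) ?_ ?_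
    · refine Asymptotics.IsBigO.of_bound 1 (Filter.Eventually.of_forall fun r => ?_)
      simp only [max_self, smul_zero, sub_zero, norm_pow, one_mul]
      norm_num
      rcases le_total r 0 with h | h
      · simpa [max_eq_right h] using sq_nonneg r
      · rw [max_eq_left h]
    · simpa using Asymptotics.isLittleO_pow_id (𝕜 := ℝ) (one_lt_two)
  · rw [max_eq_left hs.le]
    have h := (hasDerivAt_id s).pow 2
    simp only [id, Nat.cast_ofNat, mul_one, Nat.add_one_sub_one, pow_one] at h
    refine h.congr_of_eventuallyEq ?_
    filter_upwards [lt_mem_nhds hs] with r hr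
    simp [max_eq_left hr.le]

theorem contDiff_sq_max_zero : ContDiff ℝ 1 fun s : ℝ => (max s 0) ^ 2 := by
  rw [contDiff_one_iff_deriv]
  refine ⟨fun s => (hasDerivAt_sq_max_zero s).differentiableAt, ?_⟩
  rw [show deriv (fun s : ℝ => (max s 0) ^ 2) = fun s => 2 * max s 0 from
    funext fun s => (hasDerivAt_sq_max_zero s).deriv]
  fun_prop

variable {ι : Type*} [Fintype ι]

/-- The cutoff factor of the profile, supported in the ball of radius `1/2`. -/
noncomputable def cutoff (a : EuclideanSpace ℝ ι) : ℝ := max (1 - 4 * ‖a‖ ^ 2) 0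

/-- The `x`-components of the profile. -/
noncomputable def profileX (i : ι) (a : EuclideanSpace ℝ ι) : ℝ := cutoff a ^ 2 * a i

/-- The `y`-components of the profile. -/
noncomputable def profileY (i : ι) (a : EuclideanSpace ℝ ι) : ℝ :=
  -2 * cutoff a ^ 2 * (1 - 20 * ‖a‖ ^ 2) * (19 - 140 * ‖a‖ ^ 2) * a i

/-- The height of the profile, in the coordinate `t + 2 ∑ x_j y_j`. -/
noncomputable def profileH (a : EuclideanSpace ℝ ι) : ℝ :=
  (cutoff a ^ 2) ^ 2 * (1 - 20 * ‖a‖ ^ 2) ^ 3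

theorem cutoff_nonneg (a : EuclideanSpace ℝ ι) : 0 ≤ cutoff a := le_max_right _ _

theorem cutoff_eq_zero {a : EuclideanSpace ℝ ι} (ha : 1 / 2 ≤ ‖a‖) : cutoff a = 0 :=
  max_eq_right (by nlinarith)

theorem profileX_eq_zero (i : ι) {a : EuclideanSpace ℝ ι} (ha : 1 / 2 ≤ ‖a‖) :
    profileX i a = 0 := by simp [profileX, cutoff_eq_zero ha]

theorem profileY_eq_zero (i : ι) {a : EuclideanSpace ℝ ι} (ha : 1 / 2 ≤ ‖a‖) :
    profileY i a = 0 := by simp [profileY, cutoff_eq_zero ha]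

theorem profileH_eq_zero {a : EuclideanSpace ℝ ι} (ha : 1 / 2 ≤ ‖a‖) :
    profileH a = 0 := by simp [profileH, cutoff_eq_zero ha]

theorem contDiff_cutoff_sq : ContDiff ℝ 1 fun a : EuclideanSpace ℝ ι => cutoff a ^ 2 :=
  contDiff_sq_max_zero.comp
    (contDiff_const.sub (contDiff_const.mul (contDiff_norm_sq ℝ)))

theorem contDiff_coord (i : ι) {n : ℕ∞} : ContDiff ℝ n fun a : EuclideanSpace ℝ ι => a i :=
  (EuclideanSpace.proj i : EuclideanSpace ℝ ι →L[ℝ] ℝ).contDiff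

theorem contDiff_profileX (i : ι) : ContDiff ℝ 1 (profileX i) :=
  contDiff_cutoff_sq.mul (contDiff_coord i (n := 1))

theorem contDiff_profileY (i : ι) : ContDiff ℝ 1 (profileY i) := by
  have h := contDiff_norm_sq (E := EuclideanSpace ℝ ι) ℝ (n := 1)
  exact (((contDiff_const.mul contDiff_cutoff_sq).mul
    (contDiff_const.sub (contDiff_const.mul h))).mul
    (contDiff_const.sub (contDiff_const.mul h))).mul (contDiff_coord i (n := 1))

theorem contDiff_profileH : ContDiff ℝ 1 (profileH : EuclideanSpace ℝ ι → ℝ) := by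
  have h := contDiff_norm_sq (E := EuclideanSpace ℝ ι) ℝ (n := 1)
  exact (contDiff_cutoff_sq.pow 2).mul ((contDiff_const.sub (contDiff_const.mul h)).pow 3)

theorem hasCompactSupport_of_eq_zero {g : EuclideanSpace ℝ ι → ℝ}
    (hg : ∀ a, 1 / 2 ≤ ‖a‖ → g a = 0) : HasCompactSupport g :=
  HasCompactSupport.intro (isCompact_closedBall 0 (1 / 2)) fun a ha =>
    hg a (by simpa using (not_le.1 (by simpa using ha)).le)

theorem hasFDerivAt_cutoff_sq (a : EuclideanSpace ℝ ι) :
    HasFDerivAt (fun a : EuclideanSpace ℝ ι => cutoff a ^ 2)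
      ((-16 * cutoff a) • innerSL ℝ a) a := by
  have h1 : HasFDerivAt (fun a : EuclideanSpace ℝ ι => 1 - 4 * ‖a‖ ^ 2)
      (-((4 : ℝ) • ((2 : ℝ) • innerSL ℝ a))) a := by
    have := ((hasStrictFDerivAt_norm_sq a).hasFDerivAt.const_mul (4 : ℝ)).const_sub 1
    refine this.congr_fderiv ?_
    ext v
    simp
  have h2 := (hasDerivAt_sq_max_zero (1 - 4 * ‖a‖ ^ 2)).comp_hasFDerivAt a h1
  refine h2.congr_fderiv ?_
  ext v
  simp [cutoff]
  ring

theorem hasFDerivAt_profileX (i : ι) (a : EuclideanSpace ℝ ι) :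
    HasFDerivAt (profileX i) (cutoff a ^ 2 • (EuclideanSpace.proj i : EuclideanSpace ℝ ι →L[ℝ] ℝ)
      + (-16 * cutoff a * a i) • innerSL ℝ a) a := by
  have := (hasFDerivAt_cutoff_sq a).mul
    (EuclideanSpace.proj i : EuclideanSpace ℝ ι →L[ℝ] ℝ).hasFDerivAt
  refine this.congr_fderiv ?_
  ext v
  simp
  ring

theorem hasFDerivAt_profileH (a : EuclideanSpace ℝ ι) :
    HasFDerivAt profileH ((-8 * cutoff a ^ 3 * (1 - 20 * ‖a‖ ^ 2) ^ 2 * (19 - 140 * ‖a‖ ^ 2)) •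
      innerSL ℝ a) a := by
  have h1 : HasFDerivAt (fun a : EuclideanSpace ℝ ι => 1 - 20 * ‖a‖ ^ 2)
      ((-40 : ℝ) • innerSL ℝ a) a := by
    have := ((hasStrictFDerivAt_norm_sq a).hasFDerivAt.const_mul (20 : ℝ)).const_sub 1
    refine this.congr_fderiv ?_
    ext v
    simp
    ring
  have := ((hasFDerivAt_cutoff_sq a).pow 2).mul (h1.pow 3)
  refine this.congr_fderiv ?_
  ext v
  simp
  rcases le_total (1 / 2) ‖a‖ with ha | ha
  · simp [cutoff_eq_zero ha]
  · have : cutoff a = 1 - 4 * ‖a‖ ^ 2 := max_eq_left (by nlinarith [norm_nonneg a])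
    rw [this]
    ring

theorem sum_coord_smul_proj (a : EuclideanSpace ℝ ι) :
    ∑ i, a i • (EuclideanSpace.proj i : EuclideanSpace ℝ ι →L[ℝ] ℝ) = innerSL ℝ a := by
  ext v
  simp [PiLp.inner_apply, mul_comm]

theorem sum_coord_mul_self (a : EuclideanSpace ℝ ι) : ∑ i, a i * a i = ‖a‖ ^ 2 := by
  rw [EuclideanSpace.norm_sq_eq]
  simp [sq]

theorem fderiv_profileH (a : EuclideanSpace ℝ ι) :
    fderiv ℝ profileH a = ∑ i, (4 * profileY i a) • fderiv ℝ (profileX i) a := by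
  rw [(hasFDerivAt_profileH a).fderiv]
  simp_rw [(hasFDerivAt_profileX _ a).fderiv]
  have h : ∀ i, (4 * profileY i a) •
      (cutoff a ^ 2 • (EuclideanSpace.proj i : EuclideanSpace ℝ ι →L[ℝ] ℝ)
        + (-16 * cutoff a * a i) • innerSL ℝ a) =
      (-8 * cutoff a ^ 4 * (1 - 20 * ‖a‖ ^ 2) * (19 - 140 * ‖a‖ ^ 2)) •
        (a i • (EuclideanSpace.proj i : EuclideanSpace ℝ ι →L[ℝ] ℝ)) +
      (128 * cutoff a ^ 3 * (1 - 20 * ‖a‖ ^ 2) * (19 - 140 * ‖a‖ ^ 2) * (a i * a i)) •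
        innerSL ℝ a := by
    intro i
    ext v
    simp [profileY]
    ring
  simp_rw [h]
  rw [Finset.sum_add_distrib, ← Finset.smul_sum, sum_coord_smul_proj, ← Finset.sum_smul,
    ← Finset.mul_sum, sum_coord_mul_self, ← add_smul]
  congr 1
  rcases le_total (1 / 2) ‖a‖ with ha | ha
  · simp [cutoff_eq_zero ha]
  · have : cutoff a = 1 - 4 * ‖a‖ ^ 2 := max_eq_left (by nlinarith [norm_nonneg a])
    rw [this]
    ring

theorem exists_abs_sub_le_of_contDiff {g : EuclideanSpace ℝ ι → ℝ} (hg : ContDiff ℝ 1 g)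
    (h0 : ∀ a, 1 / 2 ≤ ‖a‖ → g a = 0) :
    ∃ C : ℝ, 0 ≤ C ∧ ∀ p q, |g q - g p| ≤ C * ‖q - p‖ := by
  obtain ⟨C, hC⟩ := hg.lipschitzWith_of_hasCompactSupport (hasCompactSupport_of_eq_zero h0)
    (by norm_num)
  refine ⟨C, C.2, fun p q => ?_⟩
  have := hC.dist_le_mul q p
  rwa [Real.dist_eq, dist_eq_norm] at this

theorem exists_abs_le_of_contDiff {g : EuclideanSpace ℝ ι → ℝ} (hg : ContDiff ℝ 1 g)
    (h0 : ∀ a, 1 / 2 ≤ ‖a‖ → g a = 0) : ∃ C : ℝ, 0 ≤ C ∧ ∀ p, |g p| ≤ C := by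
  obtain ⟨C, hC⟩ := (hasCompactSupport_of_eq_zero h0).exists_bound_of_continuous hg.continuous
  exact ⟨C, (norm_nonneg _).trans (hC 0), hC⟩

/-- A common bound and Lipschitz constant for the profile, together with its second order contact
estimate. -/
theorem exists_profile_bounds : ∃ C : ℝ, 0 ≤ C ∧
    (∀ (i : ι) (p : EuclideanSpace ℝ ι), |profileX i p| ≤ C) ∧
    (∀ (i : ι) (p : EuclideanSpace ℝ ι), |profileY i p| ≤ C) ∧
    (∀ p : EuclideanSpace ℝ ι, |profileH p| ≤ C) ∧
    (∀ (i : ι) (p q : EuclideanSpace ℝ ι), |profileX i q - profileX i p| ≤ C * ‖q - p‖) ∧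
    (∀ (i : ι) (p q : EuclideanSpace ℝ ι), |profileY i q - profileY i p| ≤ C * ‖q - p‖) ∧
    (∀ p q : EuclideanSpace ℝ ι, |profileH q - profileH p -
      4 * ∑ i, profileY i p * (profileX i q - profileX i p)| ≤ C * ‖q - p‖ ^ 2) := by
  choose A hA0 hA using fun i : ι =>
    exists_abs_le_of_contDiff (contDiff_profileX i) fun a => profileX_eq_zero i
  choose B hB0 hB using fun i : ι =>
    exists_abs_le_of_contDiff (contDiff_profileY i) fun a => profileY_eq_zero i
  obtain ⟨D, hD0, hD⟩ := exists_abs_le_of_contDiff (contDiff_profileH (ι := ι))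
    fun a => profileH_eq_zero
  choose K hK0 hK using fun i : ι =>
    exists_abs_sub_le_of_contDiff (contDiff_profileX i) fun a => profileX_eq_zero i
  choose L hL0 hL using fun i : ι =>
    exists_abs_sub_le_of_contDiff (contDiff_profileY i) fun a => profileY_eq_zero i
  have hsum : ∀ (f : ι → ℝ), (∀ i, 0 ≤ f i) → ∀ i, f i ≤ ∑ j, f j := fun f hf i =>
    Finset.single_le_sum (f := f) (fun j _ => hf j) (Finset.mem_univ i)
  have nA := Finset.sum_nonneg fun i (_ : i ∈ Finset.univ) => hA0 i
  have nB := Finset.sum_nonneg fun i (_ : i ∈ Finset.univ) => hB0 i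
  have nK := Finset.sum_nonneg fun i (_ : i ∈ Finset.univ) => hK0 i
  have nL := Finset.sum_nonneg fun i (_ : i ∈ Finset.univ) => hL0 i
  have nM : 0 ≤ ∑ i, 4 * (L i * K i) :=
    Finset.sum_nonneg fun i _ => mul_nonneg (by norm_num) (mul_nonneg (hL0 i) (hK0 i))
  refine ⟨∑ i, A i + ∑ i, B i + D + ∑ i, K i + ∑ i, L i + ∑ i, 4 * (L i * K i), by positivity,
    fun i p => (hA i p).trans ?_, fun i p => (hB i p).trans ?_, fun p => (hD p).trans ?_,
    fun i p q => (hK i p q).trans ?_, fun i p q => (hL i p q).trans ?_, fun p q => ?_⟩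
  · linarith [hsum A hA0 i]
  · linarith [hsum B hB0 i]
  · linarith
  · gcongr
    linarith [hsum K hK0 i]
  · gcongr
    linarith [hsum L hL0 i]
  · have hder : ∀ z ∈ closedBall p ‖q - p‖, HasFDerivWithinAt
        (fun z => profileH z - ∑ i, (4 * profileY i p) * profileX i z)
        (∑ i, (4 * (profileY i z - profileY i p)) • fderiv ℝ (profileX i) z)
        (closedBall p ‖q - p‖) z := by
      intro z _
      have h1 : HasFDerivAt (fun z => profileH z - ∑ i, (4 * profileY i p) * profileX i z)
          (fderiv ℝ profileH z - ∑ i, (4 * profileY i p) • fderiv ℝ (profileX i) z) z :=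
        HasFDerivAt.fun_sub (contDiff_profileH.differentiable (by norm_num) z).hasFDerivAt
          (HasFDerivAt.fun_sum fun i _ =>
            ((contDiff_profileX i).differentiable (by norm_num) z).hasFDerivAt.const_mul _)
      refine (h1.congr_fderiv ?_).hasFDerivWithinAt
      rw [fderiv_profileH, ← Finset.sum_sub_distrib]
      refine Finset.sum_congr rfl fun i _ => ?_
      rw [← sub_smul, mul_sub]
    have hbd : ∀ z ∈ closedBall p ‖q - p‖,
        ‖∑ i, (4 * (profileY i z - profileY i p)) • fderiv ℝ (profileX i) z‖ ≤
          (∑ i, 4 * (L i * K i)) * ‖q - p‖ := by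
      intro z hz
      rw [mem_closedBall, dist_eq_norm] at hz
      rw [Finset.sum_mul]
      refine norm_sum_le_of_le _ fun i _ => ?_
      have h1 : ‖fderiv ℝ (profileX i) z‖ ≤ K i := by
        have : LipschitzWith ⟨K i, hK0 i⟩ (profileX i) := LipschitzWith.of_dist_le_mul fun u v => by
          rw [Real.dist_eq, dist_eq_norm]
          exact hK i v u
        exact norm_fderiv_le_of_lipschitz ℝ this
      have h2 : |profileY i z - profileY i p| ≤ L i * ‖q - p‖ :=
        (hL i p z).trans (mul_le_mul_of_nonneg_left hz (hL0 i))
      rw [norm_smul, norm_mul, Real.norm_eq_abs, Real.norm_eq_abs,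
        abs_of_pos (by norm_num : (0:ℝ) < 4)]
      calc 4 * |profileY i z - profileY i p| * ‖fderiv ℝ (profileX i) z‖
          ≤ 4 * (L i * ‖q - p‖) * K i := by
            have := hL0 i
            gcongr
        _ = _ := by ring
    have hq : q ∈ closedBall p ‖q - p‖ := by simp [dist_eq_norm]
    have hp : p ∈ closedBall p ‖q - p‖ := mem_closedBall_self (norm_nonneg _)
    have := Convex.norm_image_sub_le_of_norm_hasFDerivWithin_le hder hbd
      (convex_closedBall _ _) hp hq
    rw [Real.norm_eq_abs] at this
    calc _ = |profileH q - ∑ i, (4 * profileY i p) * profileX i q -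
          (profileH p - ∑ i, (4 * profileY i p) * profileX i p)| := by
          congr 1
          simp only [mul_assoc, ← Finset.mul_sum, mul_sub, Finset.sum_sub_distrib]
          ring
      _ ≤ _ := this
      _ = (∑ i, 4 * (L i * K i)) * ‖q - p‖ ^ 2 := by ring
      _ ≤ _ := by
          gcongr
          linarith

theorem fderiv_profileX_eq_zero (i : ι) {a : EuclideanSpace ℝ ι} (ha : 1 / 2 ≤ ‖a‖) :
    fderiv ℝ (profileX i) a = 0 := by
  rw [(hasFDerivAt_profileX i a).fderiv, cutoff_eq_zero ha]
  simp

variable [DecidableEq ι]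

/-- The height of the profile times the Jacobian of its `x`-components. -/
noncomputable def profileMass (a : EuclideanSpace ℝ ι) : ℝ :=
  profileH a * covectorDet ι fun i => fderiv ℝ (profileX i) a

theorem covectorDet_fderiv_profileX (a : EuclideanSpace ℝ ι) (ha : 0 < cutoff a) :
    covectorDet ι (fun i => fderiv ℝ (profileX i) a) =
      (cutoff a ^ 2) ^ Fintype.card ι * (1 - 16 * ‖a‖ ^ 2 / cutoff a) := by
  rw [covectorDet_apply]
  have h : (Matrix.of fun i k => fderiv ℝ (profileX i) a (EuclideanSpace.single k 1)) =
      (cutoff a ^ 2) • (1 + Matrix.replicateCol Unit (fun i => -16 / cutoff a * a i) *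
        Matrix.replicateRow Unit (fun k => a k)) := by
    ext i k
    rw [Matrix.of_apply, (hasFDerivAt_profileX i a).fderiv]
    simp [Matrix.mul_apply, Matrix.one_apply, EuclideanSpace.inner_single_right]
    field_simp
    split_ifs <;> ring
  rw [h, Matrix.det_smul, Matrix.det_one_add_replicateCol_mul_replicateRow]
  congr 1
  have : (fun k => a k) ⬝ᵥ (fun i => -16 / cutoff a * a i) = -16 / cutoff a * ‖a‖ ^ 2 := by
    rw [← sum_coord_mul_self, Finset.mul_sum]
    exact Finset.sum_congr rfl fun i _ => by ring
  rw [this]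
  ring

theorem profileMass_nonneg (a : EuclideanSpace ℝ ι) : 0 ≤ profileMass a := by
  rcases (cutoff_nonneg a).eq_or_lt with h | h
  · simp [profileMass, profileH, ← h]
  · have hc : cutoff a = 1 - 4 * ‖a‖ ^ 2 := by
      refine max_eq_left (le_of_lt ?_)
      simpa [cutoff] using h
    rw [profileMass, covectorDet_fderiv_profileX a h, profileH]
    have : 1 - 16 * ‖a‖ ^ 2 / cutoff a = (1 - 20 * ‖a‖ ^ 2) / cutoff a := by
      field_simp
      rw [hc]
      ring
    rw [this]
    have h4 : 0 ≤ (1 - 20 * ‖a‖ ^ 2) ^ 4 := by positivity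
    calc (0 : ℝ) ≤ (cutoff a ^ 2) ^ 2 * (cutoff a ^ 2) ^ Fintype.card ι / cutoff a *
          (1 - 20 * ‖a‖ ^ 2) ^ 4 := by positivity
      _ = _ := by ring

theorem profileMass_zero : profileMass (0 : EuclideanSpace ℝ ι) = 1 := by
  have h : cutoff (0 : EuclideanSpace ℝ ι) = 1 := by simp [cutoff]
  rw [profileMass, covectorDet_fderiv_profileX 0 (by simp [h]), profileH]
  simp [h]

theorem profileMass_eq_zero {a : EuclideanSpace ℝ ι} (ha : 1 / 2 ≤ ‖a‖) : profileMass a = 0 := by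
  rw [profileMass, profileH_eq_zero ha, zero_mul]

end Profile

section Extension

variable {ι : Type*} [Fintype ι]

/-- The coordinates of the first kind. -/
noncomputable def leftPart : EuclideanSpace ℝ (ι ⊕ ι) →L[ℝ] EuclideanSpace ℝ ι :=
  LinearMap.toContinuousLinearMap
    { toFun := fun p => WithLp.toLp 2 fun i => p (Sum.inl i)
      map_add' := fun _ _ => rfl
      map_smul' := fun _ _ => rfl }

/-- The coordinates of the second kind. -/
noncomputable def rightPart : EuclideanSpace ℝ (ι ⊕ ι) →L[ℝ] EuclideanSpace ℝ ι :=
  LinearMap.toContinuousLinearMap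
    { toFun := fun p => WithLp.toLp 2 fun i => p (Sum.inr i)
      map_add' := fun _ _ => rfl
      map_smul' := fun _ _ => rfl }

@[simp]
theorem leftPart_apply (p : EuclideanSpace ℝ (ι ⊕ ι)) (i : ι) : leftPart p i = p (Sum.inl i) := rfl

@[simp]
theorem rightPart_apply (p : EuclideanSpace ℝ (ι ⊕ ι)) (i : ι) :
    rightPart p i = p (Sum.inr i) := rfl

theorem norm_sq_eq_leftPart_add_rightPart (p : EuclideanSpace ℝ (ι ⊕ ι)) :
    ‖p‖ ^ 2 = ‖leftPart p‖ ^ 2 + ‖rightPart p‖ ^ 2 := by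
  simp [EuclideanSpace.norm_sq_eq, Fintype.sum_sum_type]

theorem norm_leftPart_le (p : EuclideanSpace ℝ (ι ⊕ ι)) : ‖leftPart p‖ ≤ ‖p‖ :=
  le_of_sq_le_sq (by nlinarith [norm_sq_eq_leftPart_add_rightPart p]) (norm_nonneg _)

theorem norm_rightPart_le (p : EuclideanSpace ℝ (ι ⊕ ι)) : ‖rightPart p‖ ≤ ‖p‖ :=
  le_of_sq_le_sq (by nlinarith [norm_sq_eq_leftPart_add_rightPart p]) (norm_nonneg _)

/-- The sum of the two copies of a function, one for each kind of coordinates. -/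
noncomputable def twoCopies (g : EuclideanSpace ℝ ι → ℝ) (p : EuclideanSpace ℝ (ι ⊕ ι)) : ℝ :=
  g (leftPart p) + g (rightPart p)

theorem twoCopies_contDiff {g : EuclideanSpace ℝ ι → ℝ} (hg : ContDiff ℝ 1 g) :
    ContDiff ℝ 1 (twoCopies g) :=
  (hg.comp leftPart.contDiff).add (hg.comp rightPart.contDiff)

theorem fderiv_twoCopies {g : EuclideanSpace ℝ ι → ℝ} (hg : Differentiable ℝ g)
    (p : EuclideanSpace ℝ (ι ⊕ ι)) :
    fderiv ℝ (twoCopies g) p =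
      (fderiv ℝ g (leftPart p)).comp leftPart + (fderiv ℝ g (rightPart p)).comp rightPart :=
  (HasFDerivAt.fun_add ((hg _).hasFDerivAt.comp p leftPart.hasFDerivAt)
    ((hg _).hasFDerivAt.comp p rightPart.hasFDerivAt)).fderiv

theorem norm_add_smul_ge {a e : EuclideanSpace ℝ ι} (he : ‖e‖ = 1) {s : ℝ} (hs : 0 ≤ s) :
    s - ‖a‖ ≤ ‖a + s • e‖ := by
  have := norm_sub_le (a + s • e) a
  rw [add_sub_cancel_left, norm_smul, he, Real.norm_of_nonneg hs] at this
  linarith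

theorem abs_profileY_mul_profileX_sub_le {C : ℝ} (i : ι)
    (hX : ∀ p : EuclideanSpace ℝ ι, |profileX i p| ≤ C)
    (hY : ∀ p : EuclideanSpace ℝ ι, |profileY i p| ≤ C) {a b b' : EuclideanSpace ℝ ι}
    (h : 1 ≤ ‖a‖ ^ 2 + ‖b‖ ^ 2) :
    |profileY i a * (profileX i b' - profileX i b)| ≤ 9 * C ^ 2 * ‖b' - b‖ ^ 2 := by
  have hC : 0 ≤ C := (abs_nonneg _).trans (hX 0)
  rcases le_or_gt (1 / 2) ‖a‖ with ha | ha
  · rw [profileY_eq_zero i ha, zero_mul, abs_zero]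
    positivity
  have hb : 5 / 6 ≤ ‖b‖ := by
    by_contra! hb
    nlinarith [norm_nonneg a, norm_nonneg b]
  rw [profileX_eq_zero i (a := b) (by linarith), sub_zero]
  rcases le_or_gt (1 / 2) ‖b'‖ with hb' | hb'
  · rw [profileX_eq_zero i hb', mul_zero, abs_zero]
    positivity
  have hd : 1 / 3 ≤ ‖b' - b‖ := by
    have := norm_sub_norm_le b b'
    rw [norm_sub_rev] at this
    linarith
  rw [abs_mul]
  have h9 : 1 ≤ 9 * ‖b' - b‖ ^ 2 := by nlinarith
  calc |profileY i a| * |profileX i b'| ≤ C * C :=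
        mul_le_mul (hY a) (hX b') (abs_nonneg _) hC
    _ ≤ C * C * (9 * ‖b' - b‖ ^ 2) := le_mul_of_one_le_right (by positivity) h9
    _ = _ := by ring

theorem abs_twoCopies_sub_le {g : EuclideanSpace ℝ ι → ℝ} {C : ℝ} (hC : 0 ≤ C)
    (hg : ∀ p q, |g q - g p| ≤ C * ‖q - p‖) (p q : EuclideanSpace ℝ (ι ⊕ ι)) :
    |twoCopies g q - twoCopies g p| ≤ 2 * C * ‖q - p‖ := by
  have h1 := hg (leftPart p) (leftPart q)
  have h2 := hg (rightPart p) (rightPart q)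
  rw [← map_sub] at h1 h2
  have h3 := mul_le_mul_of_nonneg_left (norm_leftPart_le (q - p)) hC
  have h4 := mul_le_mul_of_nonneg_left (norm_rightPart_le (q - p)) hC
  have := abs_add_le (g (leftPart q) - g (leftPart p)) (g (rightPart q) - g (rightPart p))
  calc _ = |g (leftPart q) - g (leftPart p) + (g (rightPart q) - g (rightPart p))| := by
        simp only [twoCopies]; congr 1; ring
    _ ≤ _ := by linarith

theorem abs_twoCopies_le {g : EuclideanSpace ℝ ι → ℝ} {C : ℝ} (hg : ∀ p, |g p| ≤ C)
    (p : EuclideanSpace ℝ (ι ⊕ ι)) : |twoCopies g p| ≤ 2 * C :=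
  (abs_add_le _ _).trans (by linarith [hg (leftPart p), hg (rightPart p)])

/-- Bounds, Lipschitz estimates and the second order contact estimate off the unit ball for two
copies of the profile. -/
theorem exists_twoCopies_bounds : ∃ C : ℝ, 0 ≤ C ∧
    (∀ p : EuclideanSpace ℝ (ι ⊕ ι), |twoCopies profileH p| ≤ C) ∧
    (∀ (i : ι) (p q : EuclideanSpace ℝ (ι ⊕ ι)),
      |twoCopies (profileX i) q - twoCopies (profileX i) p| ≤ C * ‖q - p‖) ∧
    (∀ (i : ι) (p q : EuclideanSpace ℝ (ι ⊕ ι)),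
      |twoCopies (profileY i) q - twoCopies (profileY i) p| ≤ C * ‖q - p‖) ∧
    (∀ p q : EuclideanSpace ℝ (ι ⊕ ι), 1 ≤ ‖p‖ → |twoCopies profileH q - twoCopies profileH p -
      4 * ∑ i, twoCopies (profileY i) p * (twoCopies (profileX i) q - twoCopies (profileX i) p)| ≤
        C * ‖q - p‖ ^ 2) := by
  obtain ⟨C, hC, hX, hY, hH, hX', hY', hH'⟩ := exists_profile_bounds (ι := ι)
  set D : ℝ := Fintype.card ι * (72 * C ^ 2) with hD
  have hD0 : 0 ≤ D := by positivity
  have hmono : ∀ {r : ℝ}, 0 ≤ r → 2 * C * r ≤ (2 * C + D) * r := fun hr => by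
    gcongr; linarith
  refine ⟨2 * C + D, by positivity, fun p => (abs_twoCopies_le hH p).trans (by linarith),
    fun i p q => (abs_twoCopies_sub_le hC (hX' i) p q).trans (hmono (norm_nonneg _)),
    fun i p q => (abs_twoCopies_sub_le hC (hY' i) p q).trans (hmono (norm_nonneg _)),
    fun p q hp => ?_⟩
  have hp2 : 1 ≤ ‖leftPart p‖ ^ 2 + ‖rightPart p‖ ^ 2 := by
    rw [← norm_sq_eq_leftPart_add_rightPart]
    nlinarith
  have hl := norm_leftPart_le (q - p)
  have hr := norm_rightPart_le (q - p)
  have hcross : |∑ i, (profileY i (leftPart p) *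
      (profileX i (rightPart q) - profileX i (rightPart p)) + profileY i (rightPart p) *
      (profileX i (leftPart q) - profileX i (leftPart p)))| ≤
        Fintype.card ι * (18 * C ^ 2) * ‖q - p‖ ^ 2 := by
    have : ∀ i ∈ Finset.univ, ‖profileY i (leftPart p) *
        (profileX i (rightPart q) - profileX i (rightPart p)) + profileY i (rightPart p) *
        (profileX i (leftPart q) - profileX i (leftPart p))‖ ≤ 18 * C ^ 2 * ‖q - p‖ ^ 2 := by
      intro i _
      have h1 := abs_profileY_mul_profileX_sub_le i (hX i) (hY i) (b' := rightPart q) hp2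
      have h2 := abs_profileY_mul_profileX_sub_le i (hX i) (hY i) (b' := leftPart q)
        (a := rightPart p) (b := leftPart p) (by linarith)
      rw [← map_sub] at h1 h2
      have h3 : 9 * C ^ 2 * ‖rightPart (q - p)‖ ^ 2 ≤ 9 * C ^ 2 * ‖q - p‖ ^ 2 := by gcongr
      have h4 : 9 * C ^ 2 * ‖leftPart (q - p)‖ ^ 2 ≤ 9 * C ^ 2 * ‖q - p‖ ^ 2 := by gcongr
      exact (abs_add_le _ _).trans (by linarith)
    refine (norm_sum_le_of_le _ this).trans ?_
    rw [Finset.sum_const, nsmul_eq_mul, Finset.card_univ]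
    exact le_of_eq (by ring)
  have h1 := hH' (leftPart p) (leftPart q)
  have h2 := hH' (rightPart p) (rightPart q)
  rw [← map_sub] at h1 h2
  have h3 : C * ‖leftPart (q - p)‖ ^ 2 ≤ C * ‖q - p‖ ^ 2 := by gcongr
  have h4 : C * ‖rightPart (q - p)‖ ^ 2 ≤ C * ‖q - p‖ ^ 2 := by gcongr
  have hsplit : twoCopies profileH q - twoCopies profileH p -
      4 * ∑ i, twoCopies (profileY i) p * (twoCopies (profileX i) q - twoCopies (profileX i) p) =
      (profileH (leftPart q) - profileH (leftPart p) - 4 * ∑ i, profileY i (leftPart p) *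
        (profileX i (leftPart q) - profileX i (leftPart p))) +
      (profileH (rightPart q) - profileH (rightPart p) - 4 * ∑ i, profileY i (rightPart p) *
        (profileX i (rightPart q) - profileX i (rightPart p))) -
      4 * ∑ i, (profileY i (leftPart p) *
        (profileX i (rightPart q) - profileX i (rightPart p)) + profileY i (rightPart p) *
        (profileX i (leftPart q) - profileX i (leftPart p))) := by
    have : ∀ i, twoCopies (profileY i) p *
        (twoCopies (profileX i) q - twoCopies (profileX i) p) =
        profileY i (leftPart p) * (profileX i (leftPart q) - profileX i (leftPart p)) +
        profileY i (rightPart p) * (profileX i (rightPart q) - profileX i (rightPart p)) +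
        (profileY i (leftPart p) *
        (profileX i (rightPart q) - profileX i (rightPart p)) + profileY i (rightPart p) *
        (profileX i (leftPart q) - profileX i (leftPart p))) := fun i => by
      simp only [twoCopies]; ring
    simp_rw [this, Finset.sum_add_distrib]
    simp only [twoCopies]
    ring
  rw [hsplit]
  rw [abs_le] at h1 h2 hcross ⊢
  constructor <;> nlinarith

theorem self_le_rpow {r γ : ℝ} (hr : 0 ≤ r) (hr1 : r ≤ 1) (hγ0 : 0 < γ) (hγ : γ ≤ 1) :
    r ≤ r ^ γ := by
  simpa using Real.rpow_le_rpow_of_exponent_ge' hr hr1 hγ0.le hγ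

/-- A Hölder map into the contact space on the unit ball which agrees with two copies of the
profile off the open unit ball satisfies local Hölder and contact estimates everywhere. -/
theorem exists_holder_bounds {γ : ℝ} (hγ0 : 0 < γ) (hγ1 : γ ≤ 1)
    {x y : ι → EuclideanSpace ℝ (ι ⊕ ι) → ℝ} {ψ : EuclideanSpace ℝ (ι ⊕ ι) → ℝ}
    (hxo : ∀ i p, 1 ≤ ‖p‖ → x i p = twoCopies (profileX i) p)
    (hyo : ∀ i p, 1 ≤ ‖p‖ → y i p = twoCopies (profileY i) p)
    (hψo : ∀ p, 1 ≤ ‖p‖ → ψ p = twoCopies profileH p) {C : ℝ} (hC : 0 ≤ C)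
    (hx : ∀ i p q, ‖p‖ ≤ 1 → ‖q‖ ≤ 1 → |x i q - x i p| ≤ C * ‖q - p‖ ^ γ)
    (hy : ∀ i p q, ‖p‖ ≤ 1 → ‖q‖ ≤ 1 → |y i q - y i p| ≤ C * ‖q - p‖ ^ γ)
    (hψ : ∀ p q, ‖p‖ ≤ 1 → ‖q‖ ≤ 1 →
      |ψ q - ψ p - 4 * ∑ i, y i p * (x i q - x i p)| ≤ C * (‖q - p‖ ^ γ) ^ 2) :
    ∃ C' : ℝ, 0 ≤ C' ∧ (∀ i p q, ‖q - p‖ ≤ 1 → |x i q - x i p| ≤ C' * ‖q - p‖ ^ γ) ∧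
      ∀ p q, ‖q - p‖ ≤ 1 →
        |ψ q - ψ p - 4 * ∑ i, y i p * (x i q - x i p)| ≤ C' * (‖q - p‖ ^ γ) ^ 2 := by
  obtain ⟨D, hD, -, hX, hY, hH⟩ := exists_twoCopies_bounds (ι := ι)
  set B := C + D with hB
  have hB0 : 0 ≤ B := by positivity
  let good (p q : EuclideanSpace ℝ (ι ⊕ ι)) : Prop := (‖p‖ ≤ 1 ∧ ‖q‖ ≤ 1) ∨ (1 ≤ ‖p‖ ∧ 1 ≤ ‖q‖)
  have hgood : ∀ p q d, good p q → ‖q - p‖ ≤ d → d ≤ 1 →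
      (∀ i, |x i q - x i p| ≤ B * d ^ γ) ∧ (∀ i, |y i q - y i p| ≤ B * d ^ γ) ∧
      |ψ q - ψ p - 4 * ∑ i, y i p * (x i q - x i p)| ≤ B * (d ^ γ) ^ 2 := by
    intro p q d hpq hd hd1
    have hn := norm_nonneg (q - p)
    have hr0 : 0 ≤ ‖q - p‖ ^ γ := by positivity
    have hrd : ‖q - p‖ ^ γ ≤ d ^ γ := Real.rpow_le_rpow hn hd hγ0.le
    have hsr : ‖q - p‖ ≤ ‖q - p‖ ^ γ := self_le_rpow hn (hd.trans hd1) hγ0 hγ1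
    rcases hpq with ⟨hp, hq⟩ | ⟨hp, hq⟩
    · have hCB : C ≤ B := by linarith
      refine ⟨fun i => (hx i p q hp hq).trans ?_, fun i => (hy i p q hp hq).trans ?_,
        (hψ p q hp hq).trans ?_⟩ <;> gcongr
    · have hDB : D ≤ B := by linarith
      have hnd := hsr.trans hrd
      refine ⟨fun i => ?_, fun i => ?_, ?_⟩
      · rw [hxo i p hp, hxo i q hq]
        refine (hX i p q).trans ?_
        gcongr
      · rw [hyo i p hp, hyo i q hq]
        refine (hY i p q).trans ?_
        gcongr
      · simp_rw [hxo _ p hp, hxo _ q hq, hyo _ p hp, hψo p hp, hψo q hq]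
        refine (hH p q hp).trans ?_
        gcongr
  have hmid : ∀ p q : EuclideanSpace ℝ (ι ⊕ ι), ∃ m, good p m ∧ good m q ∧
      ‖m - p‖ ≤ ‖q - p‖ ∧ ‖q - m‖ ≤ ‖q - p‖ := by
    intro p q
    by_cases hpq : good p q
    · refine ⟨q, hpq, ?_, le_rfl, by simp⟩
      rcases le_total ‖q‖ 1 with h | h
      · exact Or.inl ⟨h, h⟩
      · exact Or.inr ⟨h, h⟩
    · have hconn := (convex_segment (𝕜 := ℝ) p q).isPreconnected
      have hex : ∃ m ∈ segment ℝ p q, ‖m‖ = 1 := by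
        rcases le_total ‖p‖ 1 with hp | hp
        · have hq : 1 ≤ ‖q‖ := by
            by_contra! hq
            exact hpq (Or.inl ⟨hp, hq.le⟩)
          exact hconn.intermediate_value (left_mem_segment ℝ p q) (right_mem_segment ℝ p q)
            continuous_norm.continuousOn ⟨hp, hq⟩
        · have hq : ‖q‖ ≤ 1 := by
            by_contra! hq
            exact hpq (Or.inr ⟨hp, hq.le⟩)
          exact hconn.intermediate_value (right_mem_segment ℝ p q) (left_mem_segment ℝ p q)
            continuous_norm.continuousOn ⟨hq, hp⟩
      obtain ⟨m, hm, hm1⟩ := hex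
      refine ⟨m, ?_, ?_, ?_, ?_⟩
      · rcases le_total ‖p‖ 1 with h | h
        · exact Or.inl ⟨h, hm1.le⟩
        · exact Or.inr ⟨h, hm1.ge⟩
      · rcases le_total ‖q‖ 1 with h | h
        · exact Or.inl ⟨hm1.le, h⟩
        · exact Or.inr ⟨hm1.ge, h⟩
      · exact norm_sub_le_of_mem_segment hm
      · rw [segment_symm] at hm
        rw [norm_sub_rev, norm_sub_rev q p]
        exact norm_sub_le_of_mem_segment hm
  refine ⟨2 * B + 4 * (Fintype.card ι * B ^ 2), by positivity, fun i p q hd => ?_,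
    fun p q hd => ?_⟩
  · obtain ⟨m, hpm, hmq, h1, h2⟩ := hmid p q
    have e1 := (hgood p m _ hpm h1 hd).1 i
    have e2 := (hgood m q _ hmq h2 hd).1 i
    have hr0 : 0 ≤ ‖q - p‖ ^ γ := by positivity
    have h3 : 0 ≤ 4 * (Fintype.card ι * B ^ 2) * ‖q - p‖ ^ γ := by positivity
    have := abs_sub_le (x i q) (x i m) (x i p)
    nlinarith
  · obtain ⟨m, hpm, hmq, h1, h2⟩ := hmid p q
    obtain ⟨-, ey, eψ⟩ := hgood p m _ hpm h1 hd
    obtain ⟨ex, -, eψ'⟩ := hgood m q _ hmq h2 hd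
    set r := ‖q - p‖ ^ γ with hr
    have hr0 : 0 ≤ r := by positivity
    have hcross : |∑ i, (y i m - y i p) * (x i q - x i m)| ≤
        Fintype.card ι * (B ^ 2 * r ^ 2) := by
      have : ∀ i ∈ Finset.univ, ‖(y i m - y i p) * (x i q - x i m)‖ ≤ B ^ 2 * r ^ 2 := by
        intro i _
        rw [norm_mul]
        calc _ ≤ (B * r) * (B * r) := mul_le_mul (ey i) (ex i) (abs_nonneg _) (by positivity)
          _ = _ := by ring
      refine (norm_sum_le_of_le _ this).trans ?_
      rw [Finset.sum_const, nsmul_eq_mul, Finset.card_univ]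
    have hsplit : ψ q - ψ p - 4 * ∑ i, y i p * (x i q - x i p) =
        (ψ m - ψ p - 4 * ∑ i, y i p * (x i m - x i p)) +
        (ψ q - ψ m - 4 * ∑ i, y i m * (x i q - x i m)) +
        4 * ∑ i, (y i m - y i p) * (x i q - x i m) := by
      have : ∀ i, y i p * (x i q - x i p) = y i p * (x i m - x i p) + y i m * (x i q - x i m) -
          (y i m - y i p) * (x i q - x i m) := fun i => by ring
      simp_rw [this, Finset.sum_sub_distrib, Finset.sum_add_distrib]
      ring
    rw [hsplit]
    rw [abs_le] at eψ eψ' hcross ⊢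
    constructor <;> linarith

end Extension

section Limit

variable {ι : Type*} [Fintype ι] [DecidableEq ι]

theorem covectorDet_leftPart_rightPart (u v : ι → (EuclideanSpace ℝ ι →L[ℝ] ℝ)) :
    covectorDet (ι ⊕ ι) (Sum.elim (fun i => (u i).comp leftPart) fun i => (v i).comp rightPart) =
      covectorDet ι u * covectorDet ι v := by
  have hl : ∀ k : ι, leftPart (EuclideanSpace.single (Sum.inl k) (1 : ℝ)) =
      EuclideanSpace.single k 1 := fun k => by ext i; simp
  have hr : ∀ k : ι, rightPart (EuclideanSpace.single (Sum.inr k) (1 : ℝ)) =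
      EuclideanSpace.single k 1 := fun k => by ext i; simp
  have hl' : ∀ k : ι, leftPart (EuclideanSpace.single (Sum.inr k) (1 : ℝ)) = 0 :=
    fun k => by ext i; simp
  have hr' : ∀ k : ι, rightPart (EuclideanSpace.single (Sum.inl k) (1 : ℝ)) = 0 :=
    fun k => by ext i; simp
  simp only [covectorDet_apply]
  rw [← Matrix.det_fromBlocks_zero₂₁ _ 0]
  congr 1
  ext (i | i) (k | k) <;> simp [hl, hr, hl', hr']

theorem sumElim_swap_covectorDet (hι : Even (Fintype.card ι))
    (u v : ι → (EuclideanSpace ℝ (ι ⊕ ι) →L[ℝ] ℝ)) :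
    covectorDet (ι ⊕ ι) (Sum.elim u v) = covectorDet (ι ⊕ ι) (Sum.elim v u) := by
  have hswap : Matrix.det (Matrix.fromBlocks (0 : Matrix ι ι ℝ) 1 1 (0 : Matrix ι ι ℝ)) = 1 := by
    have h : Matrix.fromBlocks (1 : Matrix ι ι ℝ) 1 0 (1 : Matrix ι ι ℝ) *
        Matrix.fromBlocks (0 : Matrix ι ι ℝ) 1 1 (0 : Matrix ι ι ℝ) =
        Matrix.fromBlocks (1 : Matrix ι ι ℝ) 1 1 (0 : Matrix ι ι ℝ) := by
      simp [Matrix.fromBlocks_multiply]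
    have h2 := congrArg Matrix.det h
    rw [Matrix.det_mul, Matrix.det_fromBlocks_zero₂₁, Matrix.det_fromBlocks_one₁₁] at h2
    simpa [Matrix.det_neg, hι.neg_one_pow] using h2
  rw [covectorDet_apply, covectorDet_apply]
  have : (Matrix.of fun i k => (Sum.elim u v i) (EuclideanSpace.single k (1 : ℝ))) =
      Matrix.fromBlocks (0 : Matrix ι ι ℝ) 1 1 (0 : Matrix ι ι ℝ) *
        (Matrix.of fun i k => (Sum.elim v u i) (EuclideanSpace.single k (1 : ℝ))) := by
    rw [← Matrix.fromBlocks_toBlocks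
      (Matrix.of fun i k => (Sum.elim v u i) (EuclideanSpace.single k (1 : ℝ))),
      Matrix.fromBlocks_multiply]
    ext (i | i) (k | k) <;>
      simp [Matrix.toBlocks₁₁, Matrix.toBlocks₁₂, Matrix.toBlocks₂₁, Matrix.toBlocks₂₂]
  rw [this, Matrix.det_mul, hswap, one_mul]

/-- The direction in which the two copies are translated. -/
noncomputable def diagDir (i₀ : ι) : EuclideanSpace ℝ (ι ⊕ ι) :=
  EuclideanSpace.single (Sum.inl i₀) 1 + EuclideanSpace.single (Sum.inr i₀) 1

theorem leftPart_diagDir (i₀ : ι) : leftPart (diagDir i₀) = EuclideanSpace.single i₀ 1 := by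
  ext i
  simp [diagDir]

theorem rightPart_diagDir (i₀ : ι) : rightPart (diagDir i₀) = EuclideanSpace.single i₀ 1 := by
  ext i
  simp [diagDir]

theorem pairingDensity_twoCopies (hι : Even (Fintype.card ι)) (i₀ : ι)
    (p : EuclideanSpace ℝ (ι ⊕ ι)) :
    pairingDensity (fun i => twoCopies (profileX i)) (twoCopies profileH) (diagDir i₀) 10 p =
      profileMass (leftPart p + (10 : ℝ) • EuclideanSpace.single i₀ 1) *
        profileMass (rightPart p) +
      profileMass (rightPart p + (10 : ℝ) • EuclideanSpace.single i₀ 1) *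
        profileMass (leftPart p) := by
  set e : EuclideanSpace ℝ ι := EuclideanSpace.single i₀ 1 with he
  have hen : ‖e‖ = 1 := by simp [he]
  have hfar : ∀ a : EuclideanSpace ℝ ι, ‖a‖ < 1 / 2 → 1 / 2 ≤ ‖a + (10 : ℝ) • e‖ := fun a ha => by
    linarith [norm_add_smul_ge (a := a) hen (s := 10) (by norm_num)]
  have hfar' : ∀ a : EuclideanSpace ℝ ι, ‖a + (10 : ℝ) • e‖ < 1 / 2 → 1 / 2 ≤ ‖a‖ := fun a ha => by
    linarith [norm_add_smul_ge (a := a) hen (s := 10) (by norm_num)]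
  have hdX : ∀ i : ι, Differentiable ℝ (profileX i) := fun i =>
    (contDiff_profileX i).differentiable (by norm_num)
  rw [pairingDensity, gradPair]
  simp only [fderiv_twoCopies (hdX _), twoCopies, map_add, map_smul, leftPart_diagDir,
    rightPart_diagDir]
  rw [← he]
  set a := leftPart p
  set b := rightPart p
  by_cases h1 : ‖a + (10 : ℝ) • e‖ < 1 / 2 ∧ ‖b‖ < 1 / 2
  · have ha := hfar' a h1.1
    have hb := hfar b h1.2
    simp only [fderiv_profileX_eq_zero _ ha, fderiv_profileX_eq_zero _ hb, profileH_eq_zero ha,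
      profileH_eq_zero hb, profileMass_eq_zero ha, ContinuousLinearMap.zero_comp, add_zero,
      zero_add, mul_zero]
    rw [covectorDet_leftPart_rightPart, profileMass, profileMass]
    ring
  by_cases h2 : ‖b + (10 : ℝ) • e‖ < 1 / 2 ∧ ‖a‖ < 1 / 2
  · have hb := hfar' b h2.1
    have ha := hfar a h2.2
    simp only [fderiv_profileX_eq_zero _ ha, fderiv_profileX_eq_zero _ hb, profileH_eq_zero ha,
      profileH_eq_zero hb, profileMass_eq_zero ha, ContinuousLinearMap.zero_comp, add_zero,
      zero_add, zero_mul]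
    rw [sumElim_swap_covectorDet hι, covectorDet_leftPart_rightPart, profileMass, profileMass]
    ring
  have hz : ∀ g : EuclideanSpace ℝ ι → ℝ, (∀ c, 1 / 2 ≤ ‖c‖ → g c = 0) →
      g (a + (10 : ℝ) • e) * g b = 0 ∧ g (b + (10 : ℝ) • e) * g a = 0 ∧
      g (a + (10 : ℝ) • e) * g a = 0 ∧ g (b + (10 : ℝ) • e) * g b = 0 := by
    intro g hg
    refine ⟨?_, ?_, ?_, ?_⟩
    · rcases not_and_or.1 h1 with h | h
      · rw [hg _ (not_lt.1 h), zero_mul]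
      · rw [hg _ (not_lt.1 h), mul_zero]
    · rcases not_and_or.1 h2 with h | h
      · rw [hg _ (not_lt.1 h), zero_mul]
      · rw [hg _ (not_lt.1 h), mul_zero]
    · rcases lt_or_ge ‖a‖ (1 / 2) with h | h
      · rw [hg _ (hfar a h), zero_mul]
      · rw [hg _ h, mul_zero]
    · rcases lt_or_ge ‖b‖ (1 / 2) with h | h
      · rw [hg _ (hfar b h), zero_mul]
      · rw [hg _ h, mul_zero]
  obtain ⟨m1, m2, -, -⟩ := hz profileMass fun c hc => profileMass_eq_zero hc
  obtain ⟨g1, g2, g3, g4⟩ := hz profileH fun c hc => profileH_eq_zero hc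
  rw [m1, m2, add_mul, mul_add, mul_add, g1, g2, g3, g4]
  simp

/-- Far from the origin the mollified maps depend on only one kind of coordinates. -/
theorem exists_gradPair_mollify_eq_zero [Nontrivial ι] (i₀ : ι)
    {x : ι → EuclideanSpace ℝ (ι ⊕ ι) → ℝ}
    (hxo : ∀ i p, 1 ≤ ‖p‖ → x i p = twoCopies (profileX i) p) {ε : ℝ} (hε : 0 < ε)
    (hε1 : ε < 1 / 2) {s : ℝ} (hs : |s| ≤ 11) {p : EuclideanSpace ℝ (ι ⊕ ι)} (hp : 40 < ‖p‖) :
    ∃ k₁ k₂ : ι ⊕ ι, k₁ ≠ k₂ ∧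
      ∀ k, gradPair (fun i => mollify ε (x i)) (diagDir i₀) s p k
          (EuclideanSpace.single k₁ (1 : ℝ)) = 0 ∧
        gradPair (fun i => mollify ε (x i)) (diagDir i₀) s p k
          (EuclideanSpace.single k₂ (1 : ℝ)) = 0 := by
  obtain ⟨i₁, i₂, hi⟩ := exists_pair_ne ι
  have key : ∀ (π π' : EuclideanSpace ℝ (ι ⊕ ι) →L[ℝ] EuclideanSpace ℝ ι),
      (∀ q, ‖π q‖ ≤ ‖q‖) → (∀ q, ‖π' q‖ ≤ ‖q‖) → ‖π (diagDir i₀)‖ = 1 →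
      (∀ (g : EuclideanSpace ℝ ι → ℝ) q, twoCopies g q = g (π q) + g (π' q)) → 28 ≤ ‖π p‖ →
      ∀ v, π' v = 0 → ∀ k, gradPair (fun i => mollify ε (x i)) (diagDir i₀) s p k v = 0 := by
    intro π π' hπ hπ' hd htwo hfar v hv
    have hloc : ∀ (q₀ : EuclideanSpace ℝ (ι ⊕ ι)) (i : ι), 2 ≤ ‖π q₀‖ →
        fderiv ℝ (mollify ε (x i)) q₀ v = 0 := by
      intro q₀ i hq₀
      have hcont : Continuous fun q => profileX i (π' q) :=
        (contDiff_profileX i).continuous.comp π'.continuous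
      have heq : mollify ε (x i) =ᶠ[𝓝 q₀] mollify ε fun q => profileX i (π' q) := by
        refine mollify_eventuallyEq hε hε1 fun q hq => ?_
        have h1 : ‖π q₀‖ - ‖π q‖ ≤ ‖q - q₀‖ := by
          have := norm_sub_norm_le (π q₀) (π q)
          rw [← map_sub] at this
          rw [norm_sub_rev]
          exact this.trans (hπ _)
        rw [hxo i q (by linarith [hπ q]), htwo, profileX_eq_zero i (a := π q) (by linarith),
          zero_add]
      rw [heq.fderiv_eq]
      refine fderiv_mollify_apply_eq_zero hε hcont (fun q t => ?_) q₀
      rw [map_add, map_smul, hv, smul_zero, add_zero]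
    rintro (i | i)
    · refine hloc _ i ?_
      have h1 : ‖π p‖ - ‖π (p + s • diagDir i₀)‖ ≤ |s| := by
        have := norm_sub_norm_le (π p) (π (p + s • diagDir i₀))
        rw [← map_sub, sub_add_cancel_left, map_neg, norm_neg, map_smul, norm_smul, hd,
          mul_one] at this
        exact this
      linarith
    · exact hloc _ i (by linarith)
  have hfar : 28 ≤ ‖leftPart p‖ ∨ 28 ≤ ‖rightPart p‖ := by
    by_contra! h
    nlinarith [norm_sq_eq_leftPart_add_rightPart p, norm_nonneg (leftPart p),
      norm_nonneg (rightPart p)]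
  rcases hfar with h | h
  · refine ⟨Sum.inl i₁, Sum.inl i₂, by simpa using hi, fun k => ⟨?_, ?_⟩⟩ <;>
    · refine key leftPart rightPart norm_leftPart_le norm_rightPart_le
        (by simp [leftPart_diagDir]) (fun g q => rfl) h _ ?_ k
      ext i
      simp
  · refine ⟨Sum.inr i₁, Sum.inr i₂, by simpa using hi, fun k => ⟨?_, ?_⟩⟩ <;>
    · refine key rightPart leftPart norm_rightPart_le norm_leftPart_le
        (by simp [rightPart_diagDir]) (fun g q => add_comm _ _) h _ ?_ k
      ext i
      simp

/-- After a large translation only the values off the unit ball matter. -/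
theorem pairingDensity_mollify_eq (i₀ : ι) {x : ι → EuclideanSpace ℝ (ι ⊕ ι) → ℝ}
    {ψ : EuclideanSpace ℝ (ι ⊕ ι) → ℝ}
    (hxo : ∀ i p, 1 ≤ ‖p‖ → x i p = twoCopies (profileX i) p)
    (hψo : ∀ p, 1 ≤ ‖p‖ → ψ p = twoCopies profileH p) {ε : ℝ} (hε : 0 < ε) (hε1 : ε < 1 / 2)
    (p : EuclideanSpace ℝ (ι ⊕ ι)) :
    pairingDensity (fun i => mollify ε (x i)) (mollify ε ψ) (diagDir i₀) 10 p =
      pairingDensity (fun i => mollify ε (twoCopies (profileX i))) (mollify ε (twoCopies profileH))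
        (diagDir i₀) 10 p := by
  have hnear : ∀ q q₀ : EuclideanSpace ℝ (ι ⊕ ι), ‖q - q₀‖ ≤ 1 / 2 → ‖q₀‖ - 1 / 2 ≤ ‖q‖ := by
    intro q q₀ h
    have := norm_sub_norm_le q₀ q
    rw [norm_sub_rev] at this
    linarith
  have hzero : ∀ q₀ : EuclideanSpace ℝ (ι ⊕ ι), 2 ≤ ‖leftPart q₀‖ → 2 ≤ ‖rightPart q₀‖ →
      mollify ε ψ q₀ = 0 ∧ mollify ε (twoCopies profileH) q₀ = 0 := by
    intro q₀ hl hr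
    have h0 : ∀ q, ‖q - q₀‖ ≤ ε → twoCopies profileH q = 0 := by
      intro q hq
      have h1 := norm_sub_norm_le (leftPart q₀) (leftPart q)
      have h2 := norm_sub_norm_le (rightPart q₀) (rightPart q)
      rw [← map_sub] at h1 h2
      have h3 := norm_leftPart_le (q₀ - q)
      have h4 := norm_rightPart_le (q₀ - q)
      rw [norm_sub_rev q₀ q] at h3 h4
      rw [twoCopies, profileH_eq_zero (by linarith), profileH_eq_zero (by linarith), add_zero]
    constructor
    · rw [mollify_congr hε (h' := fun _ => 0) fun q hq => ?_, mollify_const hε]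
      rw [hψo q, h0 q hq]
      linarith [hnear q q₀ (by linarith), norm_leftPart_le q₀]
    · rw [mollify_congr hε (h' := fun _ => 0) h0, mollify_const hε]
  have hsub : ∀ q v : EuclideanSpace ℝ (ι ⊕ ι), ‖q‖ < 2 →
      ‖leftPart v‖ = 10 → ‖rightPart v‖ = 10 →
      2 ≤ ‖leftPart (q + v)‖ ∧ 2 ≤ ‖rightPart (q + v)‖ := by
    intro q v hq hl hr
    have h1 := norm_sub_le (leftPart (q + v)) (leftPart q)
    have h2 := norm_sub_le (rightPart (q + v)) (rightPart q)
    rw [← map_sub, add_sub_cancel_left] at h1 h2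
    constructor <;> linarith [norm_leftPart_le q, norm_rightPart_le q]
  have hL : ‖leftPart ((10 : ℝ) • diagDir i₀)‖ = 10 := by
    simp [leftPart_diagDir, norm_smul]
  have hR : ‖rightPart ((10 : ℝ) • diagDir i₀)‖ = 10 := by
    simp [rightPart_diagDir, norm_smul]
  simp only [pairingDensity]
  rcases lt_or_ge ‖p‖ 2 with hp | hp
  · obtain ⟨h1, h2⟩ := hsub p _ hp hL hR
    obtain ⟨h3, h4⟩ := hzero _ h1 h2
    rw [h3, h4]
    simp
  rcases lt_or_ge ‖p + (10 : ℝ) • diagDir i₀‖ 2 with hp' | hp'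
  · obtain ⟨h1, h2⟩ := hsub _ (-((10 : ℝ) • diagDir i₀)) hp' (by rw [map_neg, norm_neg, hL])
      (by rw [map_neg, norm_neg, hR])
    rw [add_neg_cancel_right] at h1 h2
    obtain ⟨h3, h4⟩ := hzero _ h1 h2
    rw [h3, h4]
    simp
  have hx' : ∀ i q₀, 2 ≤ ‖q₀‖ → fderiv ℝ (mollify ε (x i)) q₀ =
      fderiv ℝ (mollify ε (twoCopies (profileX i))) q₀ := fun i q₀ hq₀ =>
    (mollify_eventuallyEq hε hε1 fun q hq =>
      hxo i q (by linarith [hnear q q₀ hq.le])).fderiv_eq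
  have hψ' : ∀ q₀, 2 ≤ ‖q₀‖ → mollify ε ψ q₀ = mollify ε (twoCopies profileH) q₀ := fun q₀ hq₀ =>
    mollify_congr hε fun q hq => hψo q (by linarith [hnear q q₀ (by linarith)])
  simp only [gradPair, hx' _ _ hp, hx' _ _ hp', hψ' _ hp, hψ' _ hp']

end Limit

section Obstruction

variable {ι : Type*} [Fintype ι] [DecidableEq ι]

theorem continuous_pairingDensity {x : ι → EuclideanSpace ℝ (ι ⊕ ι) → ℝ}
    {ψ : EuclideanSpace ℝ (ι ⊕ ι) → ℝ} (hx : ∀ i, ContDiff ℝ 1 (x i)) (hψ : Continuous ψ)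
    (w : EuclideanSpace ℝ (ι ⊕ ι)) (s : ℝ) : Continuous (pairingDensity x ψ w s) := by
  have hd : ∀ i, Continuous (fderiv ℝ (x i)) := fun i => (hx i).continuous_fderiv (by norm_num)
  refine ((hψ.comp (continuous_id.add continuous_const)).mul hψ).mul
    ((covectorDet (ι ⊕ ι)).cont.comp (continuous_pi ?_))
  rintro (i | i)
  · exact (hd i).comp (continuous_id.add continuous_const)
  · exact hd i

theorem pairingDensity_mollify_eq_zero [Nontrivial ι] (i₀ : ι)
    {x : ι → EuclideanSpace ℝ (ι ⊕ ι) → ℝ} (ψ : EuclideanSpace ℝ (ι ⊕ ι) → ℝ)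
    (hxo : ∀ i p, 1 ≤ ‖p‖ → x i p = twoCopies (profileX i) p) {ε : ℝ} (hε : 0 < ε)
    (hε1 : ε < 1 / 2) {p : EuclideanSpace ℝ (ι ⊕ ι)} (hp : 40 < ‖p‖) :
    pairingDensity (fun i => mollify ε (x i)) ψ (diagDir i₀) 10 p = 0 := by
  obtain ⟨k₁, k₂, hk, h⟩ := exists_gradPair_mollify_eq_zero i₀ hxo hε hε1 (s := 10)
    (by rw [abs_of_pos] <;> norm_num) hp
  rw [pairingDensity, covectorDet_eq_zero_of_columns _ k₁ k₁ k₂ hk fun i _ => h i, mul_zero]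

theorem tendsto_pairingDensity_mollify {x : ι → EuclideanSpace ℝ (ι ⊕ ι) → ℝ}
    {ψ : EuclideanSpace ℝ (ι ⊕ ι) → ℝ} (hx : ∀ i, ContDiff ℝ 1 (x i)) (hψ : Continuous ψ)
    {ε : ℕ → ℝ} (hε : ∀ k, 0 < ε k) (hlim : Filter.Tendsto ε Filter.atTop (𝓝 0))
    (w : EuclideanSpace ℝ (ι ⊕ ι)) (s : ℝ) (p : EuclideanSpace ℝ (ι ⊕ ι)) :
    Filter.Tendsto (fun k => pairingDensity (fun i => mollify (ε k) (x i)) (mollify (ε k) ψ) w s p)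
      Filter.atTop (𝓝 (pairingDensity x ψ w s p)) := by
  refine ((tendsto_mollify hε hlim hψ _).mul (tendsto_mollify hε hlim hψ _)).mul
    (((covectorDet (ι ⊕ ι)).cont.tendsto _).comp (tendsto_pi_nhds.2 ?_))
  rintro (i | i) <;>
  exact tendsto_fderiv_mollify hε hlim (hx i).continuous ((hx i).differentiable (by norm_num) _)

theorem norm_fderiv_mollify_le_of_abs_sub_le {m : Type*} [Fintype m] {ε δ : ℝ} (hε : 0 < ε)
    {h : EuclideanSpace ℝ m → ℝ} (hh : Continuous h) {p : EuclideanSpace ℝ m}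
    (H : ∀ q, ‖q - p‖ ≤ ε → |h q - h p| ≤ δ) :
    ‖fderiv ℝ (mollify ε h) p‖ ≤ (∫ z, ‖fderiv ℝ (unitKernel m) z‖) / ε * δ := by
  have := norm_fderiv_mollify_sub_sum_le (ι := Empty) hε hh (x := fun _ => h) (fun _ => hh)
    (fun _ => 0) (p := p) (δ := δ) (by simpa using H)
  simpa using this

theorem tendsto_integral_pairingDensity_twoCopies [Nontrivial ι] (i₀ : ι) {ε : ℕ → ℝ}
    (hε : ∀ k, 0 < ε k) (hε1 : ∀ k, ε k < 1 / 2) (hlim : Filter.Tendsto ε Filter.atTop (𝓝 0)) :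
    Filter.Tendsto (fun k => ∫ p, pairingDensity (fun i => mollify (ε k) (twoCopies (profileX i)))
      (mollify (ε k) (twoCopies profileH)) (diagDir i₀) 10 p) Filter.atTop
      (𝓝 (∫ p, pairingDensity (fun i : ι => twoCopies (profileX i)) (twoCopies profileH)
        (diagDir i₀) 10 p)) := by
  obtain ⟨C, hC, hH, hX, -, -⟩ := exists_twoCopies_bounds (ι := ι)
  have hXc : ∀ i : ι, ContDiff ℝ 1 (twoCopies (profileX i)) := fun i =>
    twoCopies_contDiff (contDiff_profileX i)
  have hHc : Continuous (twoCopies (profileH (ι := ι))) :=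
    (twoCopies_contDiff contDiff_profileH).continuous
  set K := ∫ z, ‖fderiv ℝ (unitKernel (ι ⊕ ι)) z‖
  refine tendsto_integral_of_dominated_convergence
    (indicator (closedBall 0 40) fun _ => C * C *
      (‖covectorDet (ι ⊕ ι)‖ * (K * C) ^ Fintype.card (ι ⊕ ι))) (fun k => ?_) ?_ (fun k => ?_) ?_
  · exact (continuous_pairingDensity (fun i => contDiff_mollify (hε k) (hXc i).continuous)
      (differentiable_mollify (hε k) hHc).continuous _ _).aestronglyMeasurable
  · exact (integrable_indicator_iff measurableSet_closedBall).2
      (integrableOn_const measure_closedBall_lt_top.ne)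
  · refine Filter.Eventually.of_forall fun p => ?_
    by_cases hp : p ∈ closedBall (0 : EuclideanSpace ℝ (ι ⊕ ι)) 40
    · rw [indicator_of_mem hp, pairingDensity, norm_mul, norm_mul]
      have hHm : ∀ q, ‖mollify (ε k) (twoCopies (profileH (ι := ι))) q‖ ≤ C := fun q =>
        abs_mollify_le (hε k) fun q' _ => hH q'
      have hXm : ∀ (i : ι) q, ‖fderiv ℝ (mollify (ε k) (twoCopies (profileX i))) q‖ ≤ K * C := by
        intro i q
        refine (norm_fderiv_mollify_le_of_abs_sub_le (δ := C * ε k) (hε k) (hXc i).continuous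
          fun q' hq' => (hX i q q').trans (by gcongr)).trans (le_of_eq ?_)
        have := (hε k).ne'
        rw [mul_comm C, ← mul_assoc, div_mul_cancel₀ _ this]
      refine mul_le_mul (mul_le_mul (hHm _) (hHm _) (norm_nonneg _) hC)
        (abs_covectorDet_le _ ?_) (norm_nonneg _) (by positivity)
      rintro (i | i)
      · exact hXm i _
      · exact hXm i _
    · rw [indicator_of_notMem hp, pairingDensity_mollify_eq_zero i₀ _ (fun i p _ => rfl) (hε k)
        (hε1 k) (by simpa using hp), norm_zero]
  · exact Filter.Eventually.of_forall fun p => tendsto_pairingDensity_mollify hXc hHc hε hlim _ _ p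

theorem integral_pairingDensity_twoCopies_pos (hι : Even (Fintype.card ι)) (i₀ : ι) :
    0 < ∫ p, pairingDensity (fun i : ι => twoCopies (profileX i)) (twoCopies profileH)
        (diagDir i₀) 10 p := by
  have hc := continuous_pairingDensity (fun i : ι => twoCopies_contDiff (contDiff_profileX i))
    (twoCopies_contDiff contDiff_profileH).continuous (diagDir i₀) 10
  have he : ‖(EuclideanSpace.single i₀ (1 : ℝ) : EuclideanSpace ℝ ι)‖ = 1 := by simp
  refine hc.integral_pos_of_hasCompactSupport_nonneg_nonzero
    (x := EuclideanSpace.single (Sum.inl i₀) (-10 : ℝ)) ?_ (fun p => ?_) ?_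
  · refine HasCompactSupport.intro (isCompact_closedBall 0 40) fun p hp => ?_
    have hp' : 40 < ‖p‖ := by simpa using hp
    rw [pairingDensity_twoCopies hι]
    have hn := norm_sq_eq_leftPart_add_rightPart p
    have hz : ∀ a b : EuclideanSpace ℝ ι, ‖a‖ ^ 2 + ‖b‖ ^ 2 = ‖p‖ ^ 2 →
        profileMass (a + (10 : ℝ) • EuclideanSpace.single i₀ 1) * profileMass b = 0 := by
      intro a b hab
      rcases le_or_gt (1 / 2) ‖b‖ with hb | hb
      · rw [profileMass_eq_zero hb, mul_zero]
      · rw [profileMass_eq_zero, zero_mul]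
        have h1 : 20 ≤ ‖a‖ := by
          by_contra! h
          nlinarith [norm_nonneg a, norm_nonneg b]
        have h2 := norm_sub_le (a + (10 : ℝ) • EuclideanSpace.single i₀ (1 : ℝ))
          ((10 : ℝ) • EuclideanSpace.single i₀ (1 : ℝ))
        rw [add_sub_cancel_right, norm_smul, he, Real.norm_of_nonneg (by norm_num)] at h2
        linarith
    rw [hz _ _ hn.symm, hz _ _ (by rw [hn, add_comm]), add_zero]
  · rw [pairingDensity_twoCopies hι]
    exact add_nonneg (mul_nonneg (profileMass_nonneg _) (profileMass_nonneg _))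
      (mul_nonneg (profileMass_nonneg _) (profileMass_nonneg _))
  · rw [pairingDensity_twoCopies hι]
    have h1 : leftPart (EuclideanSpace.single (Sum.inl i₀) (-10 : ℝ)) +
        (10 : ℝ) • EuclideanSpace.single i₀ (1 : ℝ) = (0 : EuclideanSpace ℝ ι) := by
      ext i
      by_cases hi : i = i₀ <;> simp [hi]
    have h2 : rightPart (EuclideanSpace.single (Sum.inl i₀) (-10 : ℝ)) =
        (0 : EuclideanSpace ℝ ι) := by
      ext i
      simp
    rw [h1, h2, profileMass_zero]
    exact ne_of_gt (add_pos_of_pos_of_nonneg (by norm_num)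
      (mul_nonneg (profileMass_nonneg _) (profileMass_nonneg _)))

theorem continuous_of_abs_sub_le_rpow {E : Type*} [NormedAddCommGroup E] {h : E → ℝ} {γ : ℝ}
    (hγ : 0 < γ) {C : E → ℝ} (H : ∀ p q, ‖q - p‖ ≤ 1 → |h q - h p| ≤ C p * ‖q - p‖ ^ γ) :
    Continuous h := by
  refine continuous_iff_continuousAt.2 fun p => tendsto_iff_dist_tendsto_zero.2 ?_
  have hc : Continuous fun q => C p * ‖q - p‖ ^ γ :=
    continuous_const.mul
      ((continuous_id.sub continuous_const).norm.rpow_const fun _ => Or.inr hγ.le)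
  have hlim := hc.tendsto p
  simp only [sub_self, norm_zero, Real.zero_rpow hγ.ne', mul_zero] at hlim
  refine squeeze_zero' (Filter.Eventually.of_forall fun _ => dist_nonneg) ?_ hlim
  filter_upwards [closedBall_mem_nhds p one_pos] with q hq
  rw [mem_closedBall, dist_eq_norm] at hq
  exact H p q hq

theorem tendsto_rpow_pow_div_pow {ε : ℕ → ℝ} (hε : ∀ k, 0 < ε k)
    (hlim : Filter.Tendsto ε Filter.atTop (𝓝 0)) {γ : ℝ} {n : ℕ}
    (hγ : (n + 1 : ℝ) < γ * (n + 2)) :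
    Filter.Tendsto (fun k => (ε k ^ γ) ^ (n + 2) / ε k ^ (n + 1)) Filter.atTop (𝓝 0) := by
  have h : ∀ k, (ε k ^ γ) ^ (n + 2) / ε k ^ (n + 1) = ε k ^ (γ * (n + 2) - (n + 1)) := by
    intro k
    rw [Real.rpow_sub (hε k), Real.rpow_mul (hε k).le, ← Real.rpow_natCast, ← Real.rpow_natCast]
    push_cast
    rfl
  simp_rw [h]
  have := hlim.rpow_const (p := γ * (n + 2) - (n + 1)) (Or.inr (by linarith))
  rwa [Real.zero_rpow (by linarith)] at this

/-- Two copies of the profile, restricted to the unit sphere, have no Hölder extension of large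
exponent to the unit ball that satisfies the contact estimate. -/
theorem no_holder_extension [Nonempty ι] (hι : Even (Fintype.card ι)) {γ : ℝ}
    (hγ : (2 * Fintype.card ι + 1 : ℝ) < γ * (2 * Fintype.card ι + 2)) (hγ1 : γ ≤ 1)
    {x y : ι → EuclideanSpace ℝ (ι ⊕ ι) → ℝ} {ψ : EuclideanSpace ℝ (ι ⊕ ι) → ℝ}
    (hxo : ∀ i p, 1 ≤ ‖p‖ → x i p = twoCopies (profileX i) p)
    (hyo : ∀ i p, 1 ≤ ‖p‖ → y i p = twoCopies (profileY i) p)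
    (hψo : ∀ p, 1 ≤ ‖p‖ → ψ p = twoCopies profileH p) {C₀ : ℝ} (hC₀ : 0 ≤ C₀)
    (hx : ∀ i p q, ‖p‖ ≤ 1 → ‖q‖ ≤ 1 → |x i q - x i p| ≤ C₀ * ‖q - p‖ ^ γ)
    (hy : ∀ i p q, ‖p‖ ≤ 1 → ‖q‖ ≤ 1 → |y i q - y i p| ≤ C₀ * ‖q - p‖ ^ γ)
    (hψ : ∀ p q, ‖p‖ ≤ 1 → ‖q‖ ≤ 1 →
      |ψ q - ψ p - 4 * ∑ i, y i p * (x i q - x i p)| ≤ C₀ * (‖q - p‖ ^ γ) ^ 2) : False := by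
  have hγ0 : 0 < γ := by
    by_contra! h
    have : (0 : ℝ) ≤ Fintype.card ι := by positivity
    nlinarith
  obtain ⟨i₀⟩ := ‹Nonempty ι›
  have hnt : Nontrivial ι := by
    rw [← Fintype.one_lt_card_iff_nontrivial]
    have h0 : 0 < Fintype.card ι := Fintype.card_pos_iff.2 ⟨i₀⟩
    obtain ⟨r, hr⟩ := hι
    omega
  obtain ⟨C, hC, hX, hΨ⟩ := exists_holder_bounds hγ0 hγ1 hxo hyo hψo hC₀ hx hy hψ
  have hxc : ∀ i, Continuous (x i) := fun i =>
    continuous_of_abs_sub_le_rpow (C := fun _ => C) hγ0 fun p q hpq => hX i p q hpq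
  have hψc : Continuous ψ := by
    refine continuous_of_abs_sub_le_rpow (C := fun p => C + 4 * ∑ i, |y i p| * C) hγ0
      fun p q hpq => ?_
    have hr0 : 0 ≤ ‖q - p‖ ^ γ := by positivity
    have hr1 : ‖q - p‖ ^ γ ≤ 1 := Real.rpow_le_one (norm_nonneg _) hpq hγ0.le
    have h1 := hΨ p q hpq
    have h2 : |∑ i, y i p * (x i q - x i p)| ≤ (∑ i, |y i p| * C) * ‖q - p‖ ^ γ := by
      rw [Finset.sum_mul, ← Real.norm_eq_abs]
      refine norm_sum_le_of_le _ fun i _ => ?_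
      rw [Real.norm_eq_abs, abs_mul, mul_assoc]
      exact mul_le_mul_of_nonneg_left (hX i p q hpq) (abs_nonneg _)
    have h3 : C * (‖q - p‖ ^ γ) ^ 2 ≤ C * ‖q - p‖ ^ γ := by
      gcongr
      nlinarith
    rw [abs_le] at h1 h2 ⊢
    constructor <;> nlinarith
  obtain ⟨M, hM⟩ : ∃ M, ∀ p, |ψ p| ≤ M := by
    obtain ⟨D, -, hD, -⟩ := exists_twoCopies_bounds (ι := ι)
    obtain ⟨M, hM⟩ := (isCompact_closedBall
      (0 : EuclideanSpace ℝ (ι ⊕ ι)) 1).exists_bound_of_continuousOn hψc.continuousOn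
    refine ⟨max M D, fun p => ?_⟩
    rcases le_total ‖p‖ 1 with h | h
    · exact (hM p (by simpa using h)).trans (le_max_left _ _)
    · rw [hψo p h]
      exact (hD p).trans (le_max_right _ _)
  set K := ∫ z, ‖fderiv ℝ (unitKernel (ι ⊕ ι)) z‖ with hK
  set n := Fintype.card (ι ⊕ ι) with hn
  have hn2 : (n : ℝ) = 2 * Fintype.card ι := by
    rw [hn, Fintype.card_sum]
    push_cast
    ring
  set ε : ℕ → ℝ := fun k => 1 / ((k : ℝ) + 1) / 4 with hεdef
  have hε : ∀ k, 0 < ε k := fun k => by positivity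
  have hε1 : ∀ k, ε k < 1 / 2 := fun k => by
    have : 1 / ((k : ℝ) + 1) ≤ 1 := by
      rw [div_le_one (by positivity)]
      linarith [(Nat.cast_nonneg k : (0 : ℝ) ≤ k)]
    simp only [hεdef]
    linarith
  have hlim : Filter.Tendsto ε Filter.atTop (𝓝 0) := by
    have := (tendsto_one_div_add_atTop_nhds_zero_nat (𝕜 := ℝ)).div_const 4
    simpa [hεdef] using this
  set w := diagDir i₀ with hw
  set B := M * K * C * ‖w‖ * ‖covectorDet (ι ⊕ ι)‖ * (K * C) ^ n * (1 + 2 * Fintype.card ι) *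
      (volume : Measure (EuclideanSpace ℝ (ι ⊕ ι))).real (closedBall 0 40) * 10 with hB
  have hbound : ∀ k, |∫ p, pairingDensity (fun i => mollify (ε k) (twoCopies (profileX i)))
      (mollify (ε k) (twoCopies profileH)) w 10 p| ≤ B * ((ε k ^ γ) ^ (n + 2) / ε k ^ (n + 1)) := by
    intro k
    have hk1 : ε k ≤ 1 := (hε1 k).le.trans (by norm_num)
    have hpow : ∀ p q : EuclideanSpace ℝ (ι ⊕ ι), ‖q - p‖ ≤ ε k → ‖q - p‖ ^ γ ≤ ε k ^ γ :=
      fun p q h => Real.rpow_le_rpow (norm_nonneg _) h hγ0.le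
    have := abs_integral_pairingDensity_sub_le (x := fun i => mollify (ε k) (x i))
      (ψ := mollify (ε k) ψ) (fun i => contDiff_mollify (hε k) (hxc i) (n := 3))
      (contDiff_mollify (hε k) hψc (n := 2)) w (S := 10) (R := 40)
      (A := K / ε k * (C * ε k ^ γ)) (δ := K / ε k * (C * (ε k ^ γ) ^ 2)) (M := M) (by norm_num)
      (fun i p => 4 * y i p)
      (fun s hs p hp => exists_gradPair_mollify_eq_zero i₀ hxo (hε k) (hε1 k)
        (abs_le.2 ⟨by linarith [hs.1], by linarith [hs.2]⟩) hp)
      (fun i p => norm_fderiv_mollify_le_of_abs_sub_le (hε k) (hxc i) fun q hq =>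
        (hX i p q (hq.trans hk1)).trans (mul_le_mul_of_nonneg_left (hpow p q hq) hC))
      (fun p => abs_mollify_le (hε k) fun q _ => hM q)
      (fun p => norm_fderiv_mollify_sub_sum_le (hε k) hψc hxc _ fun q hq => by
        have h1 := hΨ p q (hq.trans hk1)
        rw [Finset.mul_sum] at h1
        simp_rw [mul_assoc]
        refine h1.trans (mul_le_mul_of_nonneg_left ?_ hC)
        gcongr)
    simp only [pairingDensity_zero, integral_zero, sub_zero] at this
    rw [hw] at this ⊢
    simp_rw [← pairingDensity_mollify_eq i₀ hxo hψo (hε k) (hε1 k)]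
    refine this.trans (le_of_eq ?_)
    rw [hB, hw]
    have hεk := (hε k).ne'
    rw [← hn, div_mul_eq_mul_div, div_mul_eq_mul_div, div_pow]
    field_simp
    ring
  have hzero : Filter.Tendsto (fun k => ∫ p, pairingDensity
      (fun i => mollify (ε k) (twoCopies (profileX i)))
      (mollify (ε k) (twoCopies profileH)) w 10 p) Filter.atTop (𝓝 0) := by
    refine squeeze_zero_norm hbound ?_
    have := (tendsto_rpow_pow_div_pow hε hlim (n := n) (γ := γ) (by rwa [hn2])).const_mul B
    rwa [mul_zero] at this
  have := tendsto_nhds_unique hzero (tendsto_integral_pairingDensity_twoCopies i₀ hε hε1 hlim)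
  exact (integral_pairingDensity_twoCopies_pos hι i₀).ne this

end Obstruction

section Heisenberg

/-- The point of the Heisenberg group with given coordinates. -/
noncomputable def heisPoint (N : ℕ) (x y : Fin N → ℝ) (t : ℝ) : EuclideanSpace ℝ (Fin (2*N+1)) :=
  WithLp.toLp 2 fun k => if h : k.1 < 2 * N then
    (if k.1 % 2 = 0 then x ⟨k.1 / 2, by omega⟩ else y ⟨k.1 / 2, by omega⟩) else t

theorem heisPoint_xI {N : ℕ} (x y : Fin N → ℝ) (t : ℝ) (j : Fin N) :
    heisPoint N x y t (xI N j) = x j := by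
  have h1 : 2 * j.1 < 2 * N := by omega
  simp [heisPoint, xI]

theorem heisPoint_yI {N : ℕ} (x y : Fin N → ℝ) (t : ℝ) (j : Fin N) :
    heisPoint N x y t (yI N j) = y j := by
  have h1 : 2 * j.1 + 1 < 2 * N := by omega
  have h2 : (2 * j.1 + 1) / 2 = j.1 := by omega
  simp [heisPoint, yI, h1, h2]

theorem heisPoint_tI {N : ℕ} (x y : Fin N → ℝ) (t : ℝ) : heisPoint N x y t (tI N) = t := by
  simp [heisPoint, tI]

theorem sum_castSucc_eq_sum_xI_add_yI {N : ℕ} (φ : Fin (2*N+1) → ℝ) :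
    ∑ i : Fin (2*N), φ (Fin.castSucc i) = ∑ j : Fin N, (φ (xI N j) + φ (yI N j)) := by
  rw [← Equiv.sum_comp (finProdFinEquiv.trans (finCongr (mul_comm N 2))), Fintype.sum_prod_type]
  refine Finset.sum_congr rfl fun j _ => ?_
  rw [Fin.sum_univ_two]
  congr 2 <;> ext <;> simp [xI, yI, finProdFinEquiv]
  omega

/-- The height `t + 2 ∑ x_j y_j`, in which the contact form is `dh - 4 ∑ y_j dx_j`. -/
noncomputable def heisHeight (N : ℕ) (p : EuclideanSpace ℝ (Fin (2*N+1))) : ℝ :=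
  p (tI N) + 2 * ∑ j, p (xI N j) * p (yI N j)

theorem heisHeight_contact {N : ℕ} (p q : EuclideanSpace ℝ (Fin (2*N+1))) :
    heisHeight N q - heisHeight N p - 4 * ∑ j, p (yI N j) * (q (xI N j) - p (xI N j)) =
      -(p (tI N) - q (tI N) + 2 * ∑ j, (q (xI N j) * p (yI N j) - p (xI N j) * q (yI N j))) +
      2 * ∑ j, (q (xI N j) - p (xI N j)) * (q (yI N j) - p (yI N j)) := by
  have h : ∀ j, (q (xI N j) - p (xI N j)) * (q (yI N j) - p (yI N j)) =
      q (xI N j) * q (yI N j) - p (xI N j) * p (yI N j) +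
      (q (xI N j) * p (yI N j) - p (xI N j) * q (yI N j)) -
      2 * (p (yI N j) * (q (xI N j) - p (xI N j))) := fun j => by ring
  simp_rw [h, Finset.sum_sub_distrib, Finset.sum_add_distrib, ← Finset.mul_sum,
    Finset.sum_sub_distrib, heisHeight]
  ring

theorem abs_sum_mul_le {N : ℕ} {u v : Fin N → ℝ} {r : ℝ} (hu : ∀ j, |u j| ≤ r)
    (hv : ∀ j, |v j| ≤ r) : |∑ j, u j * v j| ≤ N * r ^ 2 := by
  have : ∀ j ∈ Finset.univ, ‖u j * v j‖ ≤ r ^ 2 := fun j _ => by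
    rw [norm_mul, sq]
    exact mul_le_mul (hu j) (hv j) (abs_nonneg _) ((abs_nonneg _).trans (hu j))
  refine (norm_sum_le_of_le _ this).trans ?_
  simp

theorem bounds_of_dK_le {N : ℕ} {p q : EuclideanSpace ℝ (Fin (2*N+1))} {r : ℝ}
    (h : dK N p q ≤ r) :
    (∀ j, |q (xI N j) - p (xI N j)| ≤ r) ∧ (∀ j, |q (yI N j) - p (yI N j)| ≤ r) ∧
      |heisHeight N q - heisHeight N p - 4 * ∑ j, p (yI N j) * (q (xI N j) - p (xI N j))| ≤
        (1 + 2 * N) * r ^ 2 := by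
  set Z := ∑ i : Fin (2*N), (p (Fin.castSucc i) - q (Fin.castSucc i)) ^ 2 with hZ
  set T := p (tI N) - q (tI N) +
    2 * ∑ j : Fin N, (q (xI N j) * p (yI N j) - p (xI N j) * q (yI N j)) with hT
  have hd : dK N p q = (Z ^ 2 + T ^ 2) ^ ((1:ℝ)/4) := rfl
  have hd0 : 0 ≤ dK N p q := by rw [hd]; positivity
  have hr : 0 ≤ r := hd0.trans h
  have h4 : Z ^ 2 + T ^ 2 ≤ r ^ 4 := by
    have : dK N p q ^ 4 = Z ^ 2 + T ^ 2 := by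
      rw [hd, ← Real.rpow_natCast, ← Real.rpow_mul (by positivity)]
      norm_num
    rw [← this]
    gcongr
  have hZ2 : Z ≤ r ^ 2 := (le_abs_self Z).trans <|
    abs_le_of_sq_le_sq (a := Z) (b := r ^ 2) (by nlinarith [sq_nonneg T]) (by positivity)
  have hT2 : |T| ≤ r ^ 2 :=
    abs_le_of_sq_le_sq (a := T) (b := r ^ 2) (by nlinarith [sq_nonneg Z]) (by positivity)
  rw [hZ, sum_castSucc_eq_sum_xI_add_yI fun i => (p i - q i) ^ 2] at hZ2
  have hj : ∀ j, (p (xI N j) - q (xI N j)) ^ 2 + (p (yI N j) - q (yI N j)) ^ 2 ≤ r ^ 2 :=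
    fun j => (Finset.single_le_sum (f := fun j => (p (xI N j) - q (xI N j)) ^ 2 +
      (p (yI N j) - q (yI N j)) ^ 2) (fun _ _ => by positivity) (Finset.mem_univ j)).trans hZ2
  have hx : ∀ j, |q (xI N j) - p (xI N j)| ≤ r := fun j =>
    abs_le_of_sq_le_sq (by nlinarith [hj j, sq_nonneg (p (yI N j) - q (yI N j))]) hr
  have hy : ∀ j, |q (yI N j) - p (yI N j)| ≤ r := fun j =>
    abs_le_of_sq_le_sq (by nlinarith [hj j, sq_nonneg (p (xI N j) - q (xI N j))]) hr
  refine ⟨hx, hy, ?_⟩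
  rw [heisHeight_contact, ← hT]
  have := abs_sum_mul_le hx hy
  rw [abs_le] at hT2 this ⊢
  constructor <;> linarith

theorem dK_le_of_bounds {N : ℕ} {p q : EuclideanSpace ℝ (Fin (2*N+1))} {r : ℝ} (hr : 0 ≤ r)
    (hx : ∀ j, |q (xI N j) - p (xI N j)| ≤ r) (hy : ∀ j, |q (yI N j) - p (yI N j)| ≤ r)
    (h : |heisHeight N q - heisHeight N p - 4 * ∑ j, p (yI N j) * (q (xI N j) - p (xI N j))| ≤
      r ^ 2) :
    dK N p q ≤ (4 * N + 1) * r := by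
  set Z := ∑ i : Fin (2*N), (p (Fin.castSucc i) - q (Fin.castSucc i)) ^ 2 with hZ
  set T := p (tI N) - q (tI N) +
    2 * ∑ j : Fin N, (q (xI N j) * p (yI N j) - p (xI N j) * q (yI N j)) with hT
  have hd : dK N p q = (Z ^ 2 + T ^ 2) ^ ((1:ℝ)/4) := rfl
  have hZ0 : 0 ≤ Z := Finset.sum_nonneg fun _ _ => sq_nonneg _
  have hZ2 : Z ≤ 2 * N * r ^ 2 := by
    rw [hZ, sum_castSucc_eq_sum_xI_add_yI fun i => (p i - q i) ^ 2]
    refine (Finset.sum_le_card_nsmul _ _ (2 * r ^ 2) fun j _ => ?_).trans (le_of_eq ?_)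
    · have h1 := sq_le_sq' (abs_le.1 (hx j)).1 (abs_le.1 (hx j)).2
      have h2 := sq_le_sq' (abs_le.1 (hy j)).1 (abs_le.1 (hy j)).2
      nlinarith
    · simp
      ring
  have hT2 : |T| ≤ (2 * N + 1) * r ^ 2 := by
    rw [heisHeight_contact, ← hT] at h
    have := abs_sum_mul_le hx hy
    rw [abs_le] at h this ⊢
    constructor <;> linarith
  have hN : (0 : ℝ) ≤ N := by positivity
  have hr2 : 0 ≤ r ^ 2 := by positivity
  have h4 : Z ^ 2 + T ^ 2 ≤ ((4 * N + 1) * r) ^ 4 := by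
    have h1 : Z ^ 2 ≤ (2 * N * r ^ 2) ^ 2 := by gcongr
    have h2 : T ^ 2 ≤ ((2 * N + 1) * r ^ 2) ^ 2 :=
      sq_le_sq' (abs_le.1 hT2).1 (abs_le.1 hT2).2
    have h3 : (2 * N * r ^ 2) ^ 2 + ((2 * N + 1) * r ^ 2) ^ 2 ≤ ((4 * N + 1) * r ^ 2) ^ 2 := by
      have : (0 : ℝ) ≤ 2 * N * r ^ 2 * ((2 * N + 1) * r ^ 2) := by positivity
      nlinarith
    have h5 : ((4 * N + 1) * r ^ 2) ^ 2 ≤ ((4 * N + 1) * r) ^ 4 := by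
      have e : ((4 * N + 1) * r) ^ 4 = ((4 * N + 1 : ℝ)) ^ 2 * ((4 * N + 1) * r ^ 2) ^ 2 := by ring
      rw [e]
      exact le_mul_of_one_le_left (by positivity) (one_le_pow₀ (by linarith))
    linarith
  rw [hd]
  calc (Z ^ 2 + T ^ 2) ^ ((1:ℝ)/4) ≤ (((4 * N + 1) * r) ^ 4) ^ ((1:ℝ)/4) := by gcongr
    _ = (4 * N + 1) * r := by
      rw [← Real.rpow_natCast, ← Real.rpow_mul (by positivity)]
      norm_num

/-- Two copies of the profile, as a map into the Heisenberg group. -/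
noncomputable def heisProfile (N : ℕ) (p : EuclideanSpace ℝ (Fin N ⊕ Fin N)) :
    EuclideanSpace ℝ (Fin (2*N+1)) :=
  heisPoint N (fun i => twoCopies (profileX i) p) (fun i => twoCopies (profileY i) p)
    (twoCopies profileH p - 2 * ∑ i, twoCopies (profileX i) p * twoCopies (profileY i) p)

theorem heisProfile_xI {N : ℕ} (p : EuclideanSpace ℝ (Fin N ⊕ Fin N)) (j : Fin N) :
    heisProfile N p (xI N j) = twoCopies (profileX j) p := heisPoint_xI _ _ _ _

theorem heisProfile_yI {N : ℕ} (p : EuclideanSpace ℝ (Fin N ⊕ Fin N)) (j : Fin N) :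
    heisProfile N p (yI N j) = twoCopies (profileY j) p := heisPoint_yI _ _ _ _

theorem heisHeight_heisProfile {N : ℕ} (p : EuclideanSpace ℝ (Fin N ⊕ Fin N)) :
    heisHeight N (heisProfile N p) = twoCopies profileH p := by
  simp only [heisHeight, heisProfile_xI, heisProfile_yI]
  rw [heisProfile, heisPoint_tI, sub_add_cancel]

theorem exists_dK_heisProfile_le (N : ℕ) : ∃ L : ℝ, ∀ p q : EuclideanSpace ℝ (Fin N ⊕ Fin N),
    1 ≤ ‖p‖ → dK N (heisProfile N p) (heisProfile N q) ≤ L * ‖q - p‖ := by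
  obtain ⟨C, hC, -, hX, hY, hH⟩ := exists_twoCopies_bounds (ι := Fin N)
  refine ⟨(4 * N + 1) * (C + 1), fun p q hp => ?_⟩
  have hle : C * ‖q - p‖ ≤ (C + 1) * ‖q - p‖ := by gcongr; linarith
  rw [mul_assoc]
  refine dK_le_of_bounds (by positivity) (fun j => ?_) (fun j => ?_) ?_
  · simp only [heisProfile_xI]
    exact (hX j p q).trans hle
  · simp only [heisProfile_yI]
    exact (hY j p q).trans hle
  · simp only [heisProfile_xI, heisProfile_yI, heisHeight_heisProfile]
    refine (hH p q hp).trans ?_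
    rw [mul_pow]
    gcongr
    nlinarith

theorem not_exists_holder_extension_heisProfile {N : ℕ} (hN : 1 ≤ N) (hE : Even N) {γ : ℝ}
    (hγ : (2 * N + 1 : ℝ) < γ * (2 * N + 2)) (hγ1 : γ ≤ 1) :
    ¬ ∃ F : EuclideanSpace ℝ (Fin N ⊕ Fin N) → EuclideanSpace ℝ (Fin (2*N+1)),
      (∀ p, ‖p‖ = 1 → F p = heisProfile N p) ∧
      ∃ C : ℝ, ∀ p q, ‖p‖ ≤ 1 → ‖q‖ ≤ 1 → dK N (F p) (F q) ≤ C * ‖q - p‖ ^ γ := by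
  rintro ⟨F, hF, C, hC⟩
  have : Nonempty (Fin N) := ⟨⟨0, hN⟩⟩
  let G : EuclideanSpace ℝ (Fin N ⊕ Fin N) → EuclideanSpace ℝ (Fin (2*N+1)) := fun p =>
    if ‖p‖ < 1 then F p else heisProfile N p
  have hout : ∀ p, 1 ≤ ‖p‖ → G p = heisProfile N p := fun p hp => if_neg (not_lt.2 hp)
  have hin : ∀ p, ‖p‖ ≤ 1 → G p = F p := by
    intro p hp
    rcases hp.lt_or_eq with h | h
    · exact if_pos h
    · rw [hout p h.ge, hF p h]
  have hG : ∀ p q, ‖p‖ ≤ 1 → ‖q‖ ≤ 1 → dK N (G p) (G q) ≤ |C| * ‖q - p‖ ^ γ := by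
    intro p q hp hq
    rw [hin p hp, hin q hq]
    exact (hC p q hp hq).trans (by gcongr; exact le_abs_self C)
  have hle : |C| ≤ |C| + (1 + 2 * N) * |C| ^ 2 := le_add_of_nonneg_right (by positivity)
  refine no_holder_extension (ι := Fin N) (γ := γ) (x := fun i p => G p (xI N i))
    (y := fun i p => G p (yI N i)) (ψ := fun p => heisHeight N (G p))
    (C₀ := |C| + (1 + 2 * N) * |C| ^ 2) (by simpa using hE) (by simpa using hγ) hγ1
    (fun i p hp => by simp only [hout p hp, heisProfile_xI])
    (fun i p hp => by simp only [hout p hp, heisProfile_yI])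
    (fun p hp => by simp only [hout p hp, heisHeight_heisProfile]) (by positivity)
    (fun i p q hp hq => ((bounds_of_dK_le (hG p q hp hq)).1 i).trans (by gcongr))
    (fun i p q hp hq => ((bounds_of_dK_le (hG p q hp hq)).2.1 i).trans (by gcongr))
    (fun p q hp hq => (bounds_of_dK_le (hG p q hp hq)).2.2.trans ?_)
  rw [mul_pow, ← mul_assoc]
  gcongr
  exact le_add_of_nonneg_left (abs_nonneg C)

end Heisenberg

/-- For `γ ∈ ((4n+1)/(4n+2), 1]` the Hölder homotopy group
`π_{4n-1}^γ(ℍ^{2n})` is nontrivial: there is a map `f : S^{4n-1} → ℝ^{4n+1}` which is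
Lipschitz into `ℍ^{2n}` but admits no `γ`-Hölder (into `ℍ^{2n}`) extension
`F : B̄^{4n} → ℝ^{4n+1}`. -/
theorem stmt4 (n : ℕ) (hn : 1 ≤ n) (γ : ℝ)
    (hγ1 : (4*(n:ℝ)+1)/(4*(n:ℝ)+2) < γ) (hγ2 : γ ≤ 1) :
    ∃ f : EuclideanSpace ℝ (Fin (4*n)) → EuclideanSpace ℝ (Fin (2*(2*n)+1)),
      (∃ L : ℝ, ∀ x ∈ sphere (0 : EuclideanSpace ℝ (Fin (4*n))) 1,
          ∀ y ∈ sphere (0 : EuclideanSpace ℝ (Fin (4*n))) 1,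
          dK (2*n) (f x) (f y) ≤ L * dist x y) ∧
      ¬ ∃ F : EuclideanSpace ℝ (Fin (4*n)) → EuclideanSpace ℝ (Fin (2*(2*n)+1)),
          (∀ x ∈ sphere (0 : EuclideanSpace ℝ (Fin (4*n))) 1, F x = f x) ∧
          ∃ C : ℝ, ∀ x ∈ closedBall (0 : EuclideanSpace ℝ (Fin (4*n))) 1,
              ∀ y ∈ closedBall (0 : EuclideanSpace ℝ (Fin (4*n))) 1,
              dK (2*n) (F x) (F y) ≤ C * dist x y ^ γ := by
  let e : Fin (4*n) ≃ Fin (2*n) ⊕ Fin (2*n) :=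
    (finCongr (by omega : 4*n = 2*n + 2*n)).trans finSumFinEquiv.symm
  let Θ : EuclideanSpace ℝ (Fin (4*n)) ≃ₗᵢ[ℝ] EuclideanSpace ℝ (Fin (2*n) ⊕ Fin (2*n)) :=
    LinearIsometryEquiv.piLpCongrLeft 2 ℝ ℝ e
  have hdist : ∀ x y, ‖Θ y - Θ x‖ = dist x y := fun x y => by
    rw [← map_sub, Θ.norm_map, dist_comm, dist_eq_norm]
  refine ⟨fun x => heisProfile (2*n) (Θ x), ?_, ?_⟩
  · obtain ⟨L, hL⟩ := exists_dK_heisProfile_le (2*n)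
    refine ⟨L, fun x hx y _ => ?_⟩
    rw [← hdist]
    exact hL _ _ (by rw [Θ.norm_map, mem_sphere_zero_iff_norm.1 hx])
  · rintro ⟨F, hF, C, hC⟩
    have hγ : (2 * (2 * n : ℕ) + 1 : ℝ) < γ * (2 * (2 * n : ℕ) + 2) := by
      rw [div_lt_iff₀ (by positivity)] at hγ1
      push_cast
      linarith
    refine not_exists_holder_extension_heisProfile (N := 2*n) (by omega) (even_two_mul n) hγ hγ2
      ⟨fun p => F (Θ.symm p), fun p hp => ?_, C, fun p q hp hq => ?_⟩
    · have := hF (Θ.symm p) (by rw [mem_sphere_zero_iff_norm, Θ.symm.norm_map, hp])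
      simpa using this
    · have := hC (Θ.symm p) (by rwa [mem_closedBall_zero_iff, Θ.symm.norm_map])
        (Θ.symm q) (by rwa [mem_closedBall_zero_iff, Θ.symm.norm_map])
      rwa [← hdist, Θ.apply_symm_apply, Θ.apply_symm_apply] at this
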